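/- There exists N such that for all n ≥ N, the maximum, over all sets X of n points in Euclidean 4-space with all pairwise distances at most 1, of the number of 3-element subsets of X with all three pairwise distances equal to 1, equals F₃(n), where F₃(n) = (n−1)²/4 + n if n ≡ 1 (mod 4), F₃(n) = (n−1)²/4 + n − 1 if n ≡ 3 (mod 4), and F₃(n) = n(n−2)/4 + n if n is even. That is, every such X contains at most F₃(n) unit triangles, and some such X attains exactly F₃(n) unit triangles. -/

import Mathlib

attribute [local instance] Classical.propDecidable

/-- The set of 3-element subsets of `X` with all three pairwise distances equal to `1`
(unit triangles). -/
noncomputable def unitTriangles (X : Finset (EuclideanSpace ℝ (Fin 4))) :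
    Finset (Finset (EuclideanSpace ℝ (Fin 4))) :=
  (X.powersetCard 3).filter (fun s => ∀ x ∈ s, ∀ y ∈ s, x ≠ y → ‖x - y‖ = 1)

/-- The extremal number of unit triangles in an `n`-point set of diameter 1 in `ℝ⁴`. -/
def F₃ (n : ℕ) : ℕ :=
  if n % 4 = 1 then (n - 1) ^ 2 / 4 + n
  else if n % 4 = 3 then (n - 1) ^ 2 / 4 + n - 1
  else n * (n - 2) / 4 + n

def dt (a b : Fin 4 → ℝ) : ℝ := a 0 * b 0 + a 1 * b 1 + a 2 * b 2 + a 3 * b 3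

/-- left multiplication by the imaginary units -/
def qm (u : Fin 3) (q : Fin 4 → ℝ) : Fin 4 → ℝ :=
  match u with
  | 0 => ![-q 1, q 0, -q 3, q 2]
  | 1 => ![-q 2, q 3, q 0, -q 1]
  | 2 => ![-q 3, -q 2, q 1, q 0]

lemma dt_comm (a b : Fin 4 → ℝ) : dt a b = dt b a := by unfold dt; ring

lemma qm_anti (u : Fin 3) (a b : Fin 4 → ℝ) : dt (qm u a) b = - dt (qm u b) a := by
  fin_cases u <;> simp [dt, qm] <;> ring

lemma frame (u : Fin 3) (q a b : Fin 4 → ℝ) :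
    dt q q * dt a b = dt q a * dt q b + dt (qm u q) a * dt (qm u q) b
      + dt (qm (u+1) q) a * dt (qm (u+1) q) b + dt (qm (u+2) q) a * dt (qm (u+2) q) b := by
  fin_cases u <;> simp [dt, qm] <;> ring

lemma frame3 (q a b : Fin 4 → ℝ) :
    dt q q * dt a b = dt q a * dt q b + dt (qm 0 q) a * dt (qm 0 q) b
      + dt (qm 1 q) a * dt (qm 1 q) b + dt (qm 2 q) a * dt (qm 2 q) b := by
  simp [dt, qm]; ring

def DD (u : Fin 3) (p q p' : Fin 4 → ℝ) : ℝ :=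
  dt (qm (u+1) q) p * dt (qm (u+2) q) p' - dt (qm (u+2) q) p * dt (qm (u+1) q) p'

lemma DD_anti (u : Fin 3) (p q p' : Fin 4 → ℝ) : DD u p q p' = - DD u p' q p := by
  unfold DD; ring

/-- the scalar key inequality -/
lemma key_half (a b c a' b' c' x0 x1 x2 x3 : ℝ)
    (h : a^2+b^2+c^2 = 3/4) (h' : a'^2+b'^2+c'^2=3/4)
    (hx : x0/2 + a*x1+b*x2+c*x3 = 1/2) :
    (b*x3-c*x2)*(b*c'-c*b') + (3/4)*(x1 - (2/3)*a*(1-x0)) *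
      ((a'-a) + (2/3)*a*((a'-a)^2+(b'-b)^2+(c'-c)^2))
      = (b^2+c^2) * ((x0/2 + a'*x1+b'*x2+c'*x3 - 1/2)
        + (1/3)*(1-x0)*((a'-a)^2+(b'-b)^2+(c'-c)^2)) := by
  have e1 : (a'-a)^2+(b'-b)^2+(c'-c)^2 = 3/2 - 2*(a*a'+b*b'+c*c') := by linear_combination h + h'
  rw [e1]
  have e3 : x0 = 1 - 2*(a*x1+b*x2+c*x3) := by linarith
  subst e3
  linear_combination ((4/3)*(a*x1+b*x2+c*x3)*(a*a'+b*b'+c*c') - x1*a') * h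

lemma key_scalar (a b c a' b' c' x0 x1 x2 x3 y0 y1 y2 y3 : ℝ)
    (h : a^2+b^2+c^2 = 3/4) (h' : a'^2+b'^2+c'^2=3/4)
    (hx : x0/2 + a*x1+b*x2+c*x3 = 1/2) (hx' : x0/2 + a'*x1+b'*x2+c'*x3 ≥ 1/2) (hx0 : x0 < 1)
    (hy : y0/2 + a*y1+b*y2+c*y3 = 1/2) (hy' : y0/2 + a'*y1+b'*y2+c'*y3 ≥ 1/2) (hy0 : y0 < 1)
    (hne : 0 < (a'-a)^2+(b'-b)^2+(c'-c)^2)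
    (p1 : x1 - (2/3)*a*(1-x0) < 0) (p3 : 0 < y1 - (2/3)*a*(1-y0)) :
    0 < ((b*x3-c*x2)*(y1 - (2/3)*a*(1-y0)) - (b*y3-c*y2)*(x1 - (2/3)*a*(1-x0))) * (b*c'-c*b') := by
  have k1 := key_half a b c a' b' c' x0 x1 x2 x3 h h' hx
  have k3 := key_half a b c a' b' c' y0 y1 y2 y3 h h' hy
  have hbc : 0 < b^2+c^2 := by
    by_contra hh
    clear k1 k3
    have hb2 := sq_nonneg b
    have hc2 := sq_nonneg c
    have hb : b = 0 := pow_eq_zero_iff (two_ne_zero) |>.1 (by linarith)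
    have hc : c = 0 := pow_eq_zero_iff (two_ne_zero) |>.1 (by linarith)
    subst hb; subst hc
    have ha : a^2 = 3/4 := by linarith
    have : a * (x1 - (2/3)*a*(1-x0)) = 0 := by
      linear_combination hx - (2/3)*(1-x0)*ha
    rcases mul_eq_zero.1 this with h0 | h0
    · subst h0; norm_num at ha
    · linarith
  have r1 : 0 < (b^2+c^2) * ((x0/2 + a'*x1+b'*x2+c'*x3 - 1/2)
        + (1/3)*(1-x0)*((a'-a)^2+(b'-b)^2+(c'-c)^2)) := by
    apply mul_pos hbc
    have : 0 < (1/3)*(1-x0)*((a'-a)^2+(b'-b)^2+(c'-c)^2) := by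
      apply mul_pos _ hne; linarith
    linarith
  have r3 : 0 < (b^2+c^2) * ((y0/2 + a'*y1+b'*y2+c'*y3 - 1/2)
        + (1/3)*(1-y0)*((a'-a)^2+(b'-b)^2+(c'-c)^2)) := by
    apply mul_pos hbc
    have : 0 < (1/3)*(1-y0)*((a'-a)^2+(b'-b)^2+(c'-c)^2) := by
      apply mul_pos _ hne; linarith
    linarith
  rw [← k1] at r1
  rw [← k3] at r3
  have s1 := mul_pos r1 p3
  have s3 := mul_pos r3 (neg_pos.2 p1)
  linarith

lemma psi_sign (a x0 x1 : ℝ) (ha : a^2 ≤ 3/4) (h0 : 1/2 ≤ x0) (h1 : x0 < 1)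
    (hg : (1 - x0^2)/3 ≤ x1^2) :
    (x1 < 0 → x1 - (2/3)*a*(1-x0) < 0) ∧ (0 < x1 → 0 < x1 - (2/3)*a*(1-x0)) := by
  have hlt : ((2/3)*a*(1-x0))^2 < x1^2 := by
    have e : ((2/3)*a*(1-x0))^2 = (4/9)*(a^2*(1-x0)^2) := by ring
    have : a^2*(1-x0)^2 ≤ 3/4*(1-x0)^2 := mul_le_mul_of_nonneg_right ha (sq_nonneg _)
    nlinarith
  have := sq_lt_sq.1 hlt
  constructor
  · intro hx
    rw [abs_of_neg hx] at this
    have := (abs_lt.1 this).1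
    linarith
  · intro hx
    rw [abs_of_pos hx] at this
    have := (abs_lt.1 this).2
    linarith

def good (u : Fin 3) (q r : Fin 4 → ℝ) : Prop := (1 - (dt q r)^2)/3 ≤ (dt (qm u q) r)^2

lemma good_symm {u : Fin 3} {q r : Fin 4 → ℝ} (h : good u q r) : good u r q := by
  unfold good at *
  rw [dt_comm r q, qm_anti u r q, neg_sq]; exact h

lemma good_exists (q r : Fin 4 → ℝ) (hq : dt q q = 1) (hr : dt r r = 1) : ∃ u, good u q r := by
  by_contra hcon
  push Not at hcon
  have h0 := hcon 0
  have h1 := hcon 1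
  have h2 := hcon 2
  unfold good at h0 h1 h2
  have := frame3 q r r
  rw [hq, hr] at this
  nlinarith

lemma key_vec (u : Fin 3) (p q q1 q3 : Fin 4 → ℝ) (hp : dt p p = 1) (hq : dt q q = 1)
    (hpq : dt q p = 1/2) (hp1 : dt p q1 = 1/2) (hp3 : dt p q3 = 1/2)
    (h1 : 1/2 ≤ dt q q1) (h1' : dt q q1 < 1) (h3 : 1/2 ≤ dt q q3) (h3' : dt q q3 < 1)
    (g1 : good u q q1) (g3 : good u q q3)
    (s1 : dt (qm u q) q1 < 0) (s3 : 0 < dt (qm u q) q3) :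
    ∃ K : ℝ, ∀ p' : Fin 4 → ℝ, dt p' p' = 1 → dt q p' = 1/2 → 1/2 ≤ dt p' q1 → 1/2 ≤ dt p' q3 →
      dt p p' < 1 → 0 < K * DD u p q p' := by
  set a := dt (qm u q) p with ha
  set b := dt (qm (u+1) q) p with hb
  set c := dt (qm (u+2) q) p with hc
  set x1 := dt (qm u q) q1 with hx1
  set x2 := dt (qm (u+1) q) q1 with hx2
  set x3 := dt (qm (u+2) q) q1 with hx3
  set y1 := dt (qm u q) q3 with hy1
  set y2 := dt (qm (u+1) q) q3 with hy2
  set y3 := dt (qm (u+2) q) q3 with hy3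
  have f1 := frame u q p p
  have f2 := frame u q p q1
  have f3 := frame u q p q3
  rw [hq, hp, hpq] at f1
  rw [hq, hp1, hpq] at f2
  rw [hq, hp3, hpq] at f3
  rw [← ha, ← hb, ← hc] at f1 f2 f3
  rw [← hx1, ← hx2, ← hx3] at f2
  rw [← hy1, ← hy2, ← hy3] at f3
  refine ⟨(b*x3-c*x2)*(y1 - (2/3)*a*(1-dt q q3)) - (b*y3-c*y2)*(x1 - (2/3)*a*(1-dt q q1)), ?_⟩
  intro p' hp' hqp' hp1' hp3' hpp'
  have f4 := frame u q p' p'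
  have f5 := frame u q p' q1
  have f6 := frame u q p' q3
  have f7 := frame u q p p'
  rw [hq, hp', hqp'] at f4
  rw [hq, hqp'] at f5
  rw [hq, hqp'] at f6
  rw [hq, hqp', hpq] at f7
  have hnorm : a^2+b^2+c^2 = 3/4 := by linarith
  have ha2 : a^2 ≤ 3/4 := by linarith [sq_nonneg b, sq_nonneg c]
  apply key_scalar a b c (dt (qm u q) p') (dt (qm (u+1) q) p') (dt (qm (u+2) q) p') (dt q q1) x1 x2 x3
    (dt q q3) y1 y2 y3 hnorm
  · linarith
  · linarith
  · linarith
  · exact h1'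
  · linarith
  · linarith
  · exact h3'
  · rw [← ha, ← hb, ← hc] at f7
    have e : (dt (qm u q) p' - a)^2 + (dt (qm (u+1) q) p' - b)^2 + (dt (qm (u+2) q) p' - c)^2
        = 2 - 2 * dt p p' := by
      linear_combination - f1 - f4 + 2 * f7
    rw [e]; linarith
  · exact (psi_sign a _ _ ha2 h1 h1' g1).1 s1
  · exact (psi_sign a _ _ ha2 h3 h3' g3).2 s3

section count
variable {ι : Type*}

lemma linear_bound (S : Finset ι) (v : ι → Fin 4 → ℝ)
    (hu : ∀ i ∈ S, dt (v i) (v i) = 1) (hd : ∀ i ∈ S, ∀ j ∈ S, 1/2 ≤ dt (v i) (v j))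
    (hinj : ∀ i ∈ S, ∀ j ∈ S, i ≠ j → dt (v i) (v j) < 1) :
    ((S ×ˢ S).filter (fun x => dt (v x.1) (v x.2) = 1/2)).card ≤ 14 * S.card := by
  -- charged points
  let chp : Fin 3 → ι → Finset ι := fun u q => S.filter (fun p => dt (v p) (v q) = 1/2 ∧
    ∀ p' ∈ S, dt (v p') (v q) = 1/2 → p' ≠ p → 0 < DD u (v p) (v q) (v p'))
  let chm : Fin 3 → ι → Finset ι := fun u q => S.filter (fun p => dt (v p) (v q) = 1/2 ∧
    ∀ p' ∈ S, dt (v p') (v q) = 1/2 → p' ≠ p → DD u (v p) (v q) (v p') < 0)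
  have hchp : ∀ u q, (chp u q).card ≤ 1 := by
    intro u q
    rw [Finset.card_le_one]
    intro a ha b hb
    simp only [chp, Finset.mem_filter] at ha hb
    by_contra hab
    have := ha.2.2 b hb.1 hb.2.1 (Ne.symm hab)
    have h2 := hb.2.2 a ha.1 ha.2.1 hab
    rw [DD_anti] at h2
    linarith
  have hchm : ∀ u q, (chm u q).card ≤ 1 := by
    intro u q
    rw [Finset.card_le_one]
    intro a ha b hb
    simp only [chm, Finset.mem_filter] at ha hb
    by_contra hab
    have := ha.2.2 b hb.1 hb.2.1 (Ne.symm hab)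
    have h2 := hb.2.2 a ha.1 ha.2.1 hab
    rw [DD_anti] at h2
    linarith
  let ch : ι → Finset ι := fun q => Finset.univ.biUnion (fun u : Fin 3 => chp u q ∪ chm u q)
  have hch : ∀ q, (ch q).card ≤ 6 := by
    intro q
    calc (ch q).card ≤ ∑ u : Fin 3, (chp u q ∪ chm u q).card := Finset.card_biUnion_le
      _ ≤ ∑ u : Fin 3, 2 := by
        apply Finset.sum_le_sum
        intro u _
        have := Finset.card_union_le (chp u q) (chm u q)
        have := hchp u q
        have := hchm u q
        omega
      _ = 6 := by simp
  let un : ι → Finset ι := fun p => S.filter (fun q => dt (v p) (v q) = 1/2 ∧ p ∉ ch q)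
  have hun : ∀ p ∈ S, (un p).card ≤ 8 := by
    intro p hp
    let sg : ι → (Fin 3 → Bool) := fun q u => decide (∃ r ∈ S, dt (v p) (v r) = 1/2 ∧ r ≠ q ∧
      good u (v q) (v r) ∧ 0 < dt (qm u (v q)) (v r))
    have hmid : ∀ q ∈ un p, ∀ u, ∀ q1 ∈ S, ∀ q3 ∈ S, dt (v p) (v q1) = 1/2 → dt (v p) (v q3) = 1/2 →
        q1 ≠ q → q3 ≠ q → good u (v q) (v q1) → good u (v q) (v q3) →
        dt (qm u (v q)) (v q1) < 0 → 0 < dt (qm u (v q)) (v q3) → False := by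
      intro q hq u q1 hq1 q3 hq3 hp1 hp3 hn1 hn3 g1 g3 s1 s3
      simp only [un, Finset.mem_filter] at hq
      obtain ⟨hqS, hpq, hnot⟩ := hq
      obtain ⟨K, hK⟩ := key_vec u (v p) (v q) (v q1) (v q3) (hu p hp) (hu q hqS)
        (by rw [dt_comm]; exact hpq) hp1 hp3
        (hd q hqS q1 hq1) (hinj q hqS q1 hq1 hn1.symm) (hd q hqS q3 hq3) (hinj q hqS q3 hq3 hn3.symm)
        g1 g3 s1 s3
      apply hnot
      simp only [ch, Finset.mem_biUnion, Finset.mem_univ, true_and, Finset.mem_union]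
      refine ⟨u, ?_⟩
      have hK' : ∀ p' ∈ S, dt (v p') (v q) = 1/2 → p' ≠ p → 0 < K * DD u (v p) (v q) (v p') := by
        intro p' hp' hp'q hne
        exact hK (v p') (hu p' hp') (by rw [dt_comm]; exact hp'q) (hd p' hp' q1 hq1)
          (hd p' hp' q3 hq3) (hinj p hp p' hp' hne.symm)
      rcases le_or_gt 0 K with hK0 | hK0
      · left
        simp only [chp, Finset.mem_filter]
        refine ⟨hp, hpq, fun p' h1 h2 h3 => ?_⟩
        exact pos_of_mul_pos_right (hK' p' h1 h2 h3) hK0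
      · right
        simp only [chm, Finset.mem_filter]
        refine ⟨hp, hpq, fun p' h1 h2 h3 => ?_⟩
        have := hK' p' h1 h2 h3
        by_contra hcon
        push Not at hcon
        nlinarith
    have hinjsg : Set.InjOn sg (un p) := by
      intro q hq r hr hqr
      by_contra hne
      have hq' := hq
      have hr' := hr
      simp only [un, Finset.coe_filter, Set.mem_ofPred_eq] at hq' hr'
      obtain ⟨u, hg⟩ := good_exists (v q) (v r) (hu q hq'.1) (hu r hr'.1)
      have hnz : dt (qm u (v q)) (v r) ≠ 0 := by
        intro h0
        unfold good at hg
        rw [h0] at hg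
        have h1 := hd q hq'.1 r hr'.1
        have h2 := hinj q hq'.1 r hr'.1 hne
        nlinarith
      have main : ∀ q r, q ∈ un p → r ∈ un p → q ≠ r → good u (v q) (v r) →
          0 < dt (qm u (v q)) (v r) → sg q u = sg r u → False := by
        intro q r hq hr hne hg hpos heq
        have hq' := hq
        have hr' := hr
        simp only [un, Finset.mem_filter] at hq' hr'
        have t1 : sg q u = true := by
          simp only [sg, decide_eq_true_eq]
          exact ⟨r, hr'.1, hr'.2.1, hne.symm, hg, hpos⟩
        rw [t1] at heq
        have t2 := heq.symm
        simp only [sg, decide_eq_true_eq] at t2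
        obtain ⟨q3, h3, h3p, h3n, h3g, h3s⟩ := t2
        refine hmid r hr u q hq'.1 q3 h3 hq'.2.1 h3p hne h3n (good_symm hg) h3g ?_ h3s
        rw [qm_anti]; linarith
      rcases lt_or_gt_of_ne hnz with hlt | hgt
      · refine main r q hr hq (Ne.symm hne) (good_symm hg) ?_ (by rw [hqr])
        rw [qm_anti]; linarith
      · exact main q r hq hr hne hg hgt (by rw [hqr])
    have := Finset.card_le_card_of_injOn (t := Finset.univ) sg (fun _ _ => Finset.mem_coe.2 (Finset.mem_univ _)) hinjsg
    simpa using this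
  have hcov : (S ×ˢ S).filter (fun x => dt (v x.1) (v x.2) = 1/2) ⊆
      (S.biUnion fun q => (ch q).image (fun p => (p, q))) ∪
      (S.biUnion fun p => (un p).image (fun q => (p, q))) := by
    rintro ⟨p, q⟩ hx
    simp only [Finset.mem_filter, Finset.mem_product] at hx
    rw [Finset.mem_union]
    by_cases hc : p ∈ ch q
    · left
      rw [Finset.mem_biUnion]
      exact ⟨q, hx.1.2, Finset.mem_image.2 ⟨p, hc, rfl⟩⟩
    · right
      rw [Finset.mem_biUnion]
      refine ⟨p, hx.1.1, Finset.mem_image.2 ⟨q, ?_, rfl⟩⟩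
      simp only [un, Finset.mem_filter]
      exact ⟨hx.1.2, hx.2, hc⟩
  calc _ ≤ _ := Finset.card_le_card hcov
    _ ≤ _ := Finset.card_union_le _ _
    _ ≤ S.card * 6 + S.card * 8 := by
      apply Nat.add_le_add
      · exact Finset.card_biUnion_le_card_mul _ _ _ (fun q _ => Finset.card_image_le.trans (hch q))
      · exact Finset.card_biUnion_le_card_mul _ _ _ (fun q hq => Finset.card_image_le.trans (hun q hq))
    _ = _ := by ring

end count

abbrev E4 := EuclideanSpace ℝ (Fin 4)

noncomputable def nb (X : Finset E4) (z : E4) : Finset E4 := X.filter (fun y => ‖y - z‖ = 1)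

noncomputable def edg (X : Finset E4) : Finset (Finset E4) :=
  (X.powersetCard 2).filter (fun s => ∀ x ∈ s, ∀ y ∈ s, x ≠ y → ‖x - y‖ = 1)

lemma mem_nb {X : Finset E4} {z y : E4} : y ∈ nb X z ↔ y ∈ X ∧ ‖y - z‖ = 1 := by
  simp [nb]

lemma nsq (x y : E4) : ‖x - y‖^2 = (x 0 - y 0)^2 + (x 1 - y 1)^2 + (x 2 - y 2)^2 + (x 3 - y 3)^2 := by
  rw [EuclideanSpace.norm_sq_eq, Fin.sum_univ_four]
  simp

lemma one_iff_sq (x y : E4) : ‖x - y‖ = 1 ↔ ‖x - y‖^2 = 1 := by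
  constructor
  · intro h; rw [h]; norm_num
  · intro h
    have := norm_nonneg (x - y)
    nlinarith

lemma le_one_iff_sq (x y : E4) : ‖x - y‖ ≤ 1 ↔ ‖x - y‖^2 ≤ 1 := by
  have := norm_nonneg (x - y)
  constructor
  · intro h; nlinarith
  · intro h; nlinarith

lemma ext_of_nsq {x y : E4} (h : ‖x - y‖^2 = 0) : x = y := by
  have : ‖x - y‖ = 0 := by simpa using h
  exact sub_eq_zero.1 (norm_eq_zero.1 this)

lemma mem_edg_pair {X : Finset E4} {s : Finset E4} :
    s ∈ edg X ↔ ∃ x ∈ X, ∃ y ∈ X, ‖x - y‖ = 1 ∧ s = {x, y} := by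
  simp only [edg, Finset.mem_filter, Finset.mem_powersetCard]
  constructor
  · rintro ⟨⟨hs, hc⟩, h⟩
    obtain ⟨x, y, hxy, rfl⟩ := Finset.card_eq_two.1 hc
    exact ⟨x, hs (by simp), y, hs (by simp), h x (by simp) y (by simp) hxy, rfl⟩
  · rintro ⟨x, hx, y, hy, h, rfl⟩
    have hxy : x ≠ y := by rintro rfl; simp at h
    refine ⟨⟨?_, Finset.card_pair hxy⟩, ?_⟩
    · intro a ha
      simp only [Finset.mem_insert, Finset.mem_singleton] at ha
      rcases ha with rfl | rfl <;> assumption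
    · intro a ha b hb hab
      simp only [Finset.mem_insert, Finset.mem_singleton] at ha hb
      rcases ha with rfl | rfl <;> rcases hb with rfl | rfl
      · exact absurd rfl hab
      · exact h
      · rw [norm_sub_rev]; exact h
      · exact absurd rfl hab

lemma mem_uT {X : Finset E4} {s : Finset E4} :
    s ∈ unitTriangles X ↔ ∃ x ∈ X, ∃ y ∈ X, ∃ z ∈ X, ‖x - y‖ = 1 ∧ ‖x - z‖ = 1 ∧ ‖y - z‖ = 1 ∧
      s = {x, y, z} := by
  simp only [unitTriangles, Finset.mem_filter, Finset.mem_powersetCard]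
  constructor
  · rintro ⟨⟨hs, hc⟩, h⟩
    obtain ⟨x, y, z, hxy, hxz, hyz, rfl⟩ := Finset.card_eq_three.1 hc
    exact ⟨x, hs (by simp), y, hs (by simp), z, hs (by simp), h x (by simp) y (by simp) hxy,
      h x (by simp) z (by simp) hxz, h y (by simp) z (by simp) hyz, rfl⟩
  · rintro ⟨x, hx, y, hy, z, hz, h1, h2, h3, rfl⟩
    have hxy : x ≠ y := by rintro rfl; simp at h1
    have hxz : x ≠ z := by rintro rfl; simp at h2
    have hyz : y ≠ z := by rintro rfl; simp at h3
    refine ⟨⟨?_, Finset.card_eq_three.2 ⟨x, y, z, hxy, hxz, hyz, rfl⟩⟩, ?_⟩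
    · intro a ha
      simp only [Finset.mem_insert, Finset.mem_singleton] at ha
      rcases ha with rfl | rfl | rfl <;> assumption
    · intro a ha b hb hab
      simp only [Finset.mem_insert, Finset.mem_singleton] at ha hb
      have h1' := h1
      have h2' := h2
      have h3' := h3
      rw [norm_sub_rev] at h1' h2' h3'
      rcases ha with rfl | rfl | rfl <;> rcases hb with rfl | rfl | rfl <;>
        first | exact absurd rfl hab | assumption

def DiamOne (X : Finset E4) : Prop := ∀ x ∈ X, ∀ y ∈ X, ‖x - y‖ ≤ 1

lemma edg_bound (Y : Finset E4) (z : E4) (hY : ∀ y ∈ Y, ‖y - z‖ = 1) (hd : DiamOne Y) :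
    (edg Y).card ≤ 14 * Y.card := by
  let v : E4 → Fin 4 → ℝ := fun y i => y i - z i
  have hdt : ∀ x ∈ Y, ∀ y ∈ Y, dt (v x) (v y) = 1 - ‖x - y‖^2 / 2 := by
    intro x hx y hy
    have h1 := (one_iff_sq _ _).1 (hY x hx)
    have h2 := (one_iff_sq _ _).1 (hY y hy)
    rw [nsq] at h1 h2 ⊢
    simp only [dt, v]
    linear_combination h1 / 2 + h2 / 2
  have lb := linear_bound Y v (by intro i hi; rw [hdt i hi i hi]; simp)
    (by intro i hi j hj; rw [hdt i hi j hj]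
        have := (le_one_iff_sq _ _).1 (hd i hi j hj); linarith)
    (by intro i hi j hj hij; rw [hdt i hi j hj]
        have : 0 < ‖i - j‖ := norm_pos_iff.2 (sub_ne_zero.2 hij)
        nlinarith)
  refine le_trans ?_ lb
  have : edg Y ⊆ ((Y ×ˢ Y).filter (fun x => dt (v x.1) (v x.2) = 1/2)).image
      (fun x => ({x.1, x.2} : Finset E4)) := by
    intro s hs
    obtain ⟨x, hx, y, hy, h, rfl⟩ := mem_edg_pair.1 hs
    refine Finset.mem_image.2 ⟨(x, y), ?_, rfl⟩
    simp only [Finset.mem_filter, Finset.mem_product]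
    refine ⟨⟨hx, hy⟩, ?_⟩
    rw [hdt x hx y hy, h]; norm_num
  exact (Finset.card_le_card this).trans Finset.card_image_le

lemma DiamOne.mono {X Y : Finset E4} (h : DiamOne X) (hs : Y ⊆ X) : DiamOne Y :=
  fun x hx y hy => h x (hs hx) y (hs hy)

lemma nb_sub (X : Finset E4) (z : E4) : nb X z ⊆ X := Finset.filter_subset _ _

lemma T_le_deg (X : Finset E4) (hd : DiamOne X) :
    (unitTriangles X).card ≤ 14 * ∑ z ∈ X, (nb X z).card := by
  have : unitTriangles X ⊆ X.biUnion (fun z => (edg (nb X z)).image (insert z)) := by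
    intro s hs
    obtain ⟨x, hx, y, hy, z, hz, h1, h2, h3, rfl⟩ := mem_uT.1 hs
    rw [Finset.mem_biUnion]
    refine ⟨x, hx, Finset.mem_image.2 ⟨{y, z}, mem_edg_pair.2 ⟨y, ?_, z, ?_, h3, rfl⟩, rfl⟩⟩
    · exact mem_nb.2 ⟨hy, by rw [norm_sub_rev]; exact h1⟩
    · exact mem_nb.2 ⟨hz, by rw [norm_sub_rev]; exact h2⟩
  calc _ ≤ _ := Finset.card_le_card this
    _ ≤ ∑ z ∈ X, ((edg (nb X z)).image (insert z)).card := Finset.card_biUnion_le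
    _ ≤ ∑ z ∈ X, 14 * (nb X z).card := by
      apply Finset.sum_le_sum
      intro z hz
      exact Finset.card_image_le.trans (edg_bound _ z (fun y hy => (mem_nb.1 hy).2)
        (hd.mono (nb_sub X z)))
    _ = _ := by rw [Finset.mul_sum]

/-- common neighbours -/
noncomputable def cn (X : Finset E4) (S : Finset E4) : Finset E4 :=
  X.filter (fun y => ∀ z ∈ S, ‖y - z‖ = 1)

lemma mem_cn {X S : Finset E4} {y : E4} : y ∈ cn X S ↔ y ∈ X ∧ ∀ z ∈ S, ‖y - z‖ = 1 := by
  simp [cn]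

/-- Kővári–Sós–Turán for triples. -/
lemma kst (X : Finset E4) (s : ℕ)
    (h : ∀ a ∈ X, ∀ b ∈ X, ∀ c ∈ X, a ≠ b → a ≠ c → b ≠ c → (cn X {a, b, c}).card ≤ s) :
    (∑ z ∈ X, (nb X z).card)^3 ≤ (s+3) * X.card^5 := by
  have pm : (∑ z ∈ X, (nb X z).card)^3 ≤ X.card^2 * ∑ z ∈ X, (nb X z).card^3 :=
    pow_sum_le_card_mul_sum_pow (fun _ _ => Nat.zero_le _) 2
  have cnt : ∑ z ∈ X, (nb X z).card^3 ≤ (s+3) * X.card^3 := by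
    have dc := Finset.sum_card_bipartiteAbove_eq_sum_card_bipartiteBelow (s := X)
      (t := X ×ˢ X ×ˢ X) (fun z t => ‖t.1 - z‖ = 1 ∧ ‖t.2.1 - z‖ = 1 ∧ ‖t.2.2 - z‖ = 1)
    have e1 : ∀ z ∈ X, (Finset.bipartiteAbove
        (fun z (t : E4 × E4 × E4) => ‖t.1 - z‖ = 1 ∧ ‖t.2.1 - z‖ = 1 ∧ ‖t.2.2 - z‖ = 1)
        (X ×ˢ X ×ˢ X) z).card = (nb X z).card^3 := by
      intro z hz
      have : Finset.bipartiteAbove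
        (fun z (t : E4 × E4 × E4) => ‖t.1 - z‖ = 1 ∧ ‖t.2.1 - z‖ = 1 ∧ ‖t.2.2 - z‖ = 1)
        (X ×ˢ X ×ˢ X) z = nb X z ×ˢ nb X z ×ˢ nb X z := by
        ext ⟨a, b, c⟩
        simp only [Finset.mem_bipartiteAbove, Finset.mem_product, mem_nb]
        tauto
      rw [this, Finset.card_product, Finset.card_product]; ring
    rw [← Finset.sum_congr rfl e1, dc, Finset.sum_product]
    simp_rw [Finset.sum_product]
    have bd : ∀ a ∈ X, ∀ b ∈ X, ∀ c ∈ X, (Finset.bipartiteBelow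
        (fun z (t : E4 × E4 × E4) => ‖t.1 - z‖ = 1 ∧ ‖t.2.1 - z‖ = 1 ∧ ‖t.2.2 - z‖ = 1)
        X (a, b, c)).card ≤ s + (if a = b then X.card else 0) + (if a = c then X.card else 0)
          + (if b = c then X.card else 0) := by
      intro a ha b hb c hc
      have triv : (Finset.bipartiteBelow
        (fun z (t : E4 × E4 × E4) => ‖t.1 - z‖ = 1 ∧ ‖t.2.1 - z‖ = 1 ∧ ‖t.2.2 - z‖ = 1)
        X (a, b, c)).card ≤ X.card := Finset.card_le_card (Finset.filter_subset _ _)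
      by_cases hab : a = b
      · rw [if_pos hab]; omega
      by_cases hac : a = c
      · rw [if_pos hac]; omega
      by_cases hbc : b = c
      · rw [if_pos hbc]; omega
      rw [if_neg hab, if_neg hac, if_neg hbc]
      refine le_trans (Finset.card_le_card ?_) (h a ha b hb c hc hab hac hbc)
      intro z hz
      rw [Finset.mem_bipartiteBelow] at hz
      rw [mem_cn]
      refine ⟨hz.1, ?_⟩
      intro w hw
      simp only [Finset.mem_insert, Finset.mem_singleton] at hw
      rw [norm_sub_rev]
      rcases hw with rfl | rfl | rfl
      · exact hz.2.1
      · exact hz.2.2.1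
      · exact hz.2.2.2
    calc _ ≤ ∑ a ∈ X, ∑ b ∈ X, ∑ c ∈ X, (s + (if a = b then X.card else 0)
          + (if a = c then X.card else 0) + (if b = c then X.card else 0)) :=
          Finset.sum_le_sum fun a ha => Finset.sum_le_sum fun b hb => Finset.sum_le_sum fun c hc =>
            bd a ha b hb c hc
      _ ≤ ∑ a ∈ X, ∑ b ∈ X, (X.card * s + (if a = b then X.card*X.card else 0)
          + X.card + X.card) := by
          refine Finset.sum_le_sum fun a ha => Finset.sum_le_sum fun b hb => ?_
          rw [Finset.sum_add_distrib, Finset.sum_add_distrib, Finset.sum_add_distrib]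
          rw [Finset.sum_ite_eq X a, Finset.sum_ite_eq X b, if_pos ha, if_pos hb]
          split_ifs <;> simp
      _ ≤ ∑ a ∈ X, (X.card * (X.card * s) + X.card*X.card + X.card*X.card + X.card * X.card) := by
          refine Finset.sum_le_sum fun a ha => ?_
          rw [Finset.sum_add_distrib, Finset.sum_add_distrib, Finset.sum_add_distrib]
          rw [Finset.sum_ite_eq X a, if_pos ha]
          simp
      _ = _ := by simp; ring
  calc _ ≤ _ := pm
    _ ≤ X.card^2 * ((s+3) * X.card^3) := Nat.mul_le_mul_left _ cnt
    _ = _ := by ring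

lemma orth_of_dist (a a' b b' : E4) (h1 : ‖a - b‖ = 1) (h2 : ‖a' - b‖ = 1) (h3 : ‖a - b'‖ = 1)
    (h4 : ‖a' - b'‖ = 1) : inner ℝ (a' - a) (b' - b) = 0 := by
  have e1 : ‖a - b‖^2 = 1 := by rw [h1]; norm_num
  have e2 : ‖a' - b‖^2 = 1 := by rw [h2]; norm_num
  have e3 : ‖a - b'‖^2 = 1 := by rw [h3]; norm_num
  have e4 : ‖a' - b'‖^2 = 1 := by rw [h4]; norm_num
  rw [norm_sub_sq_real] at e1 e2 e3 e4
  simp only [inner_sub_left, inner_sub_right]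
  linarith

lemma indep_of_sphere (a1 a2 a3 b : E4) (h12 : a1 ≠ a2) (h13 : a1 ≠ a3) (h23 : a2 ≠ a3)
    (h1 : ‖a1 - b‖ = 1) (h2 : ‖a2 - b‖ = 1) (h3 : ‖a3 - b‖ = 1) :
    Module.finrank ℝ (Submodule.span ℝ {a2 - a1, a3 - a1} : Submodule ℝ E4) = 2 := by
  have hli : LinearIndependent ℝ ![a2 - a1, a3 - a1] := by
    rw [LinearIndependent.pair_iff]
    intro s t hst
    set u := a2 - a1 with hu
    set v := a3 - a1 with hv
    have hu0 : u ≠ 0 := fun h => h12 (sub_eq_zero.1 h).symm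
    have hv0 : v ≠ 0 := fun h => h13 (sub_eq_zero.1 h).symm
    have huv : u ≠ v := fun h => h23 (by simpa [hu, hv] using h)
    have e1 : ‖a1 - b‖^2 = 1 := by rw [h1]; norm_num
    have e2 : ‖(a1 - b) + u‖^2 = 1 := by
      rw [show (a1 - b) + u = a2 - b by rw [hu]; abel, h2]; norm_num
    have e3 : ‖(a1 - b) + v‖^2 = 1 := by
      rw [show (a1 - b) + v = a3 - b by rw [hv]; abel, h3]; norm_num
    rw [norm_add_sq_real] at e2 e3
    have hin : s * inner ℝ (a1 - b) u + t * inner ℝ (a1 - b) v = 0 := by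
      have := congrArg (fun w => inner ℝ (a1 - b) w) hst
      simpa [inner_add_right, inner_smul_right] using this
    have hlin : s * ‖u‖^2 + t * ‖v‖^2 = 0 := by linear_combination (-2) * hin + s * (e2 - e1) + t * (e3 - e1)
    have hsu : s • u = -(t • v) := eq_neg_of_add_eq_zero_left hst
    have hn : s^2 * ‖u‖^2 = t^2 * ‖v‖^2 := by
      have := congrArg (fun w => ‖w‖^2) hsu
      simpa [norm_smul, mul_pow] using this
    have hup : 0 < ‖u‖^2 := by positivity
    have hvp : 0 < ‖v‖^2 := by positivity
    by_cases hs : s = 0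
    · refine ⟨hs, ?_⟩
      subst hs
      simpa [hvp.ne'] using hlin
    · exfalso
      have h5 : s * (s + t) * ‖u‖^2 = 0 := by linear_combination hn + t * hlin
      have h6 : s + t = 0 := by
        rcases mul_eq_zero.1 h5 with h | h
        · rcases mul_eq_zero.1 h with h | h
          · exact absurd h hs
          · exact h
        · exact absurd h hup.ne'
      have h7 : s • (u - v) = 0 := by
        have : t = -s := by linarith
        rw [this] at hst
        rw [smul_sub, sub_eq_add_neg, ← neg_smul]; exact hst
      rcases smul_eq_zero.1 h7 with h | h
      · exact hs h
      · exact huv (sub_eq_zero.1 h)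
  have := finrank_span_eq_card hli
  have hr : Set.range ![a2 - a1, a3 - a1] = {a2 - a1, a3 - a1} := by
    rw [Matrix.range_cons, Matrix.range_cons, Matrix.range_empty, Set.union_empty]; rfl
  rw [hr] at this
  simpa using this

lemma plane_coords (V : Submodule ℝ E4) (hV : Module.finrank ℝ V = 2) :
    ∃ f g : E4 → ℝ, ∀ u v : E4, u ∈ V → v ∈ V →
      (f u - f v)^2 + (g u - g v)^2 = ‖u - v‖^2 ∧ f u ^2 + g u ^2 = ‖u‖^2 := by
  let bs : OrthonormalBasis (Fin 2) ℝ V := (stdOrthonormalBasis ℝ V).reindex (finCongr hV)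
  refine ⟨fun u => inner ℝ (bs 0 : E4) u, fun u => inner ℝ (bs 1 : E4) u, ?_⟩
  have key : ∀ u ∈ V, (inner ℝ (bs 0 : E4) u)^2 + (inner ℝ (bs 1 : E4) u)^2 = ‖u‖^2 := by
    intro u hu
    have := bs.sum_sq_norm_inner_right (⟨u, hu⟩ : V)
    simpa [Fin.sum_univ_two] using this
  intro u v hu hv
  refine ⟨?_, key u hu⟩
  rw [← key (u - v) (V.sub_mem hu hv)]
  simp only [inner_sub_right]

lemma lenz (a1 a2 a3 b1 b2 b3 : E4) (ha12 : a1 ≠ a2) (ha13 : a1 ≠ a3) (ha23 : a2 ≠ a3)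
    (hb12 : b1 ≠ b2) (hb13 : b1 ≠ b3) (hb23 : b2 ≠ b3)
    (h1 : ∀ b ∈ ({b1, b2, b3} : Set E4), ‖a1 - b‖ = 1)
    (h2 : ∀ b ∈ ({b1, b2, b3} : Set E4), ‖a2 - b‖ = 1)
    (h3 : ∀ b ∈ ({b1, b2, b3} : Set E4), ‖a3 - b‖ = 1)
    (A B : Set E4) (hA : ∀ a ∈ A, ∀ b ∈ ({b1, b2, b3} : Set E4), ‖a - b‖ = 1)
    (hB : ∀ b ∈ B, ∀ a ∈ ({a1, a2, a3} : Set E4), ‖b - a‖ = 1) :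
    ∃ (ρ σ : ℝ) (x y z w : E4 → ℝ), ρ + σ = 1 ∧
      (∀ a ∈ A, x a ^2 + y a ^2 = ρ) ∧ (∀ b ∈ B, z b ^2 + w b ^2 = σ) ∧
      (∀ a ∈ A, ∀ a' ∈ A, ‖a - a'‖^2 = (x a - x a')^2 + (y a - y a')^2) ∧
      (∀ b ∈ B, ∀ b' ∈ B, ‖b - b'‖^2 = (z b - z b')^2 + (w b - w b')^2) ∧
      (∀ a ∈ A, ∀ b ∈ B, ‖a - b‖ = 1) := by
  simp only [Set.mem_insert_iff, Set.mem_singleton_iff, forall_eq_or_imp, forall_eq] at h1 h2 h3 hA hB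
  obtain ⟨h11, h12, h13⟩ := h1
  obtain ⟨h21, h22, h23⟩ := h2
  obtain ⟨h31, h32, h33⟩ := h3
  set V : Submodule ℝ E4 := Submodule.span ℝ {a2 - a1, a3 - a1} with hVdef
  set W : Submodule ℝ E4 := Submodule.span ℝ {b2 - b1, b3 - b1} with hWdef
  have hV : Module.finrank ℝ V = 2 := indep_of_sphere a1 a2 a3 b1 ha12 ha13 ha23 h11 h21 h31
  have hW : Module.finrank ℝ W = 2 := by
    refine indep_of_sphere b1 b2 b3 a1 hb12 hb13 hb23 ?_ ?_ ?_ <;> rw [norm_sub_rev] <;> assumption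
  have memW : ∀ u : E4, inner ℝ u (b2 - b1) = 0 → inner ℝ u (b3 - b1) = 0 → u ∈ Wᗮ := by
    intro u hu1 hu2
    rw [Submodule.mem_orthogonal']
    intro v hv
    rw [hWdef, Submodule.mem_span_pair] at hv
    obtain ⟨s, t, rfl⟩ := hv
    simp [inner_add_right, inner_smul_right, hu1, hu2]
  have memV : ∀ u : E4, inner ℝ u (a2 - a1) = 0 → inner ℝ u (a3 - a1) = 0 → u ∈ Vᗮ := by
    intro u hu1 hu2
    rw [Submodule.mem_orthogonal']
    intro v hv
    rw [hVdef, Submodule.mem_span_pair] at hv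
    obtain ⟨s, t, rfl⟩ := hv
    simp [inner_add_right, inner_smul_right, hu1, hu2]
  have hWo : Module.finrank ℝ Wᗮ = 2 := by
    have := Submodule.finrank_add_finrank_orthogonal W
    simp at this; omega
  have hVo : Module.finrank ℝ Vᗮ = 2 := by
    have := Submodule.finrank_add_finrank_orthogonal V
    simp at this; omega
  have hVW : V = Wᗮ := by
    apply Submodule.eq_of_le_of_finrank_eq
    · rw [hVdef, Submodule.span_le]
      rintro u (rfl | rfl)
      · exact memW _ (orth_of_dist _ _ _ _ h11 h21 h12 h22) (orth_of_dist _ _ _ _ h11 h21 h13 h23)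
      · exact memW _ (orth_of_dist _ _ _ _ h11 h31 h12 h32) (orth_of_dist _ _ _ _ h11 h31 h13 h33)
    · rw [hV, hWo]
  obtain ⟨p, hp, q, hq, hpq⟩ := V.exists_add_mem_mem_orthogonal (a1 - b1)
  have hAV : ∀ a ∈ A, a - a1 + p ∈ V := by
    intro a ha
    refine V.add_mem ?_ hp
    obtain ⟨k1, k2, k3⟩ := hA a ha
    rw [hVW]
    exact memW _ (orth_of_dist _ _ _ _ h11 k1 h12 k2) (orth_of_dist _ _ _ _ h11 k1 h13 k3)
  have hBV : ∀ b ∈ B, b - b1 - q ∈ Vᗮ := by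
    intro b hb
    refine Submodule.sub_mem _ ?_ hq
    obtain ⟨k1, k2, k3⟩ := hB b hb
    rw [norm_sub_rev] at h11 h21 h31
    exact memV _ (orth_of_dist _ _ _ _ h11 k1 h21 k2) (orth_of_dist _ _ _ _ h11 k1 h31 k3)
  have pyth : ∀ u v : E4, u ∈ V → v ∈ Vᗮ → ‖u - v‖^2 = ‖u‖^2 + ‖v‖^2 := by
    intro u v hu hv
    rw [norm_sub_sq_real, Submodule.inner_right_of_mem_orthogonal hu hv]; ring
  have hpq1 : ‖p‖^2 + ‖q‖^2 = 1 := by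
    have := pyth p (-q) hp (Submodule.neg_mem _ hq)
    rw [norm_neg, sub_neg_eq_add, ← hpq, h11] at this; linarith
  have hAn : ∀ a ∈ A, ‖a - a1 + p‖^2 = ‖p‖^2 := by
    intro a ha
    have := pyth _ (-q) (hAV a ha) (Submodule.neg_mem _ hq)
    rw [norm_neg, sub_neg_eq_add, add_assoc, ← hpq, sub_add_sub_cancel, (hA a ha).1] at this
    linarith
  have hBn : ∀ b ∈ B, ‖b - b1 - q‖^2 = ‖q‖^2 := by
    intro b hb
    have := pyth _ _ hp (hBV b hb)
    rw [show p - (b - b1 - q) = (p + q) - (b - b1) by abel, ← hpq, sub_sub_sub_cancel_right, norm_sub_rev,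
      (hB b hb).1] at this
    linarith
  obtain ⟨f, g, hfg⟩ := plane_coords V hV
  obtain ⟨f', g', hfg'⟩ := plane_coords Vᗮ hVo
  refine ⟨‖p‖^2, ‖q‖^2, fun a => f (a - a1 + p), fun a => g (a - a1 + p), fun b => f' (b - b1 - q),
    fun b => g' (b - b1 - q), hpq1, ?_, ?_, ?_, ?_, ?_⟩
  · intro a ha
    rw [← hAn a ha]; exact (hfg _ _ (hAV a ha) (hAV a ha)).2
  · intro a ha
    rw [← hBn a ha]; exact (hfg' _ _ (hBV a ha) (hBV a ha)).2
  · intro a ha a' ha'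
    rw [(hfg _ _ (hAV a ha) (hAV a' ha')).1]; congr 2; abel
  · intro a ha a' ha'
    rw [(hfg' _ _ (hBV a ha) (hBV a' ha')).1]; congr 2; abel
  · intro a ha b hb
    rw [one_iff_sq]
    have := pyth _ _ (hAV a ha) (hBV b hb)
    rw [hAn a ha, hBn b hb, show a - a1 + p - (b - b1 - q) = (p + q) + (a - a1) - (b - b1) by abel,
      ← hpq, hpq1] at this
    rw [← this]; congr 2; abel

lemma two_edg_le (S : Finset E4) : 2 * (edg S).card ≤ ∑ x ∈ S, (nb S x).card := by
  have h := Finset.sum_card_bipartiteAbove_eq_sum_card_bipartiteBelow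
    (s := S) (t := edg S) (fun x e => x ∈ e)
  have h1 : ∀ e ∈ edg S, (S.bipartiteBelow (fun x e => x ∈ e) e).card = 2 := by
    intro e he
    have he' := he
    simp only [edg, Finset.mem_filter, Finset.mem_powersetCard] at he
    rw [← he.1.2]
    congr 1
    ext z
    simp only [Finset.bipartiteBelow, Finset.mem_filter]
    exact ⟨fun h => h.2, fun h => ⟨he.1.1 h, h⟩⟩
  have h2 : ∀ x ∈ S, ((edg S).bipartiteAbove (fun x e => x ∈ e) x).card ≤ (nb S x).card := by
    intro x hx
    refine le_trans (Finset.card_le_card ?_) (Finset.card_image_le (f := fun y => ({x, y} : Finset E4)))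
    intro e he
    simp only [Finset.bipartiteAbove, Finset.mem_filter] at he
    obtain ⟨he, hxe⟩ := he
    obtain ⟨a, ha, b, hb, hab, rfl⟩ := mem_edg_pair.1 he
    simp only [Finset.mem_insert, Finset.mem_singleton] at hxe
    rw [Finset.mem_image]
    rcases hxe with rfl | rfl
    · exact ⟨b, mem_nb.2 ⟨hb, by rw [norm_sub_rev]; exact hab⟩, rfl⟩
    · exact ⟨a, mem_nb.2 ⟨ha, hab⟩, Finset.pair_comm _ _⟩
  rw [Finset.sum_congr rfl h1] at h
  have h3 := Finset.sum_le_sum h2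
  rw [h] at h3
  simpa [mul_comm] using h3

structure Circ (S : Finset E4) (D e : E4 → E4 → ℝ) (m : ℝ) : Prop where
  anti : ∀ i j, D i j = - D j i
  pl : ∀ x y k l, D x y * D k l - D x k * D y l + D x l * D y k = 0
  ne : ∀ i ∈ S, ∀ j ∈ S, i ≠ j → D i j ≠ 0
  le : ∀ i ∈ S, ∀ j ∈ S, D i j ^ 2 ≤ m
  adj : ∀ i ∈ S, ∀ j ∈ S, (‖i - j‖ = 1 ↔ D i j ^ 2 = m)
  mpos : 0 < m
  de : ∀ i ∈ S, ∀ j ∈ S, D i j ^ 2 + e i j ^ 2 = 1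
  dk : ∀ x ∈ S, ∀ k ∈ S, ∀ l ∈ S, D k l = e x k * D x l - D x k * e x l

lemma two_bd (u v m : ℝ) (hu : u^2 ≤ m^2) (hv : v^2 ≤ m^2) (hu0 : u ≠ 0) (hv0 : v ≠ 0)
    (h : (u - v)^2 = m^2) : u * v < 0 := by
  by_contra hc
  push Not at hc
  have h0 : 0 < u * v := lt_of_le_of_ne hc (mul_ne_zero hu0 hv0).symm
  have h1 : u^2 + v^2 - 2*(u*v) = m^2 := by rw [← h]; ring
  have h2 : 0 < v^2 := by positivity
  have h3 : 0 < u^2 := by positivity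
  -- v^2 ≥ 2uv and u^2 ≥ 2uv
  have h4 : v * v ≥ 2 * (u * v) := by nlinarith
  have h5 : u * u ≥ 2 * (u * v) := by nlinarith
  nlinarith [sq_nonneg (u - v)]

lemma Circ.sqmul {S : Finset E4} {D e : E4 → E4 → ℝ} {m : ℝ} (C : Circ S D e m) {i j k l : E4}
    (hi : i ∈ S) (hj : j ∈ S) (hk : k ∈ S) (hl : l ∈ S) : (D i j * D k l)^2 ≤ m^2 := by
  rw [mul_pow, sq m]
  exact mul_le_mul (C.le i hi j hj) (C.le k hk l hl) (sq_nonneg _) C.mpos.le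

lemma Circ.Q {S : Finset E4} {D e : E4 → E4 → ℝ} {m : ℝ} (C : Circ S D e m) {x y k l : E4}
    (hx : x ∈ S) (hy : y ∈ S) (hk : k ∈ S) (hl : l ∈ S) (hxy : ‖x - y‖ = 1) (hkl : ‖k - l‖ = 1)
    (h1 : k ≠ x) (h2 : k ≠ y) (h3 : l ≠ x) (h4 : l ≠ y) :
    (D x k * D y k) * (D x l * D y l) < 0 := by
  have a1 := (C.adj x hx y hy).1 hxy
  have a2 := (C.adj k hk l hl).1 hkl
  have := two_bd (D x k * D y l) (D x l * D y k) m (C.sqmul hx hk hy hl) (C.sqmul hx hl hy hk)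
    (mul_ne_zero (C.ne x hx k hk h1.symm) (C.ne y hy l hl h4.symm))
    (mul_ne_zero (C.ne x hx l hl h3.symm) (C.ne y hy k hk h2.symm))
    (by
      have h := C.pl x y k l
      have : D x k * D y l - D x l * D y k = D x y * D k l := by linarith
      rw [this, mul_pow, a1, a2, sq])
  nlinarith

lemma Circ.ii {S : Finset E4} {D e : E4 → E4 → ℝ} {m : ℝ} (C : Circ S D e m) {x y k l : E4}
    (hx : x ∈ S) (hy : y ∈ S) (hk : k ∈ S) (hl : l ∈ S) (hxk : ‖x - k‖ = 1)
    (hyl : ‖y - l‖ = 1) (h1 : x ≠ l) (h2 : y ≠ k) :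
    0 < (D x k * D y k) * (D x l * D y l) := by
  have a1 := (C.adj x hx k hk).1 hxk
  have a2 := (C.adj y hy l hl).1 hyl
  have h := C.pl x y k l
  set P := D x k * D y l with hP
  set R := D x l * D y k with hR
  have hP2 : P^2 = m^2 := by rw [hP, mul_pow, a1, a2, sq]
  have hle : (P - R)^2 ≤ m^2 := by
    have : P - R = D x y * D k l := by linarith
    rw [this]; exact C.sqmul hx hy hk hl
  have hR0 : R ≠ 0 := mul_ne_zero (C.ne x hx l hl h1) (C.ne y hy k hk h2)
  have : 0 < R^2 := by positivity
  have h3 : 0 < P * R := by nlinarith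
  calc 0 < P * R := h3
    _ = _ := by rw [hP, hR]; ring

lemma Circ.deg {S : Finset E4} {D e : E4 → E4 → ℝ} {m : ℝ} (C : Circ S D e m) {x : E4}
    (hx : x ∈ S) : (nb S x).card ≤ 2 := by
  have hD : ∀ k ∈ nb S x, k ∈ S ∧ D x k ^2 = m := by
    intro k hk
    rw [mem_nb] at hk
    exact ⟨hk.1, (C.adj x hx k hk.1).1 (by rw [norm_sub_rev]; exact hk.2)⟩
  set w := Real.sqrt (m * (1 - m)) with hw
  have hmap : ∀ k ∈ nb S x, D x k * e x k ∈ ({w, -w} : Finset ℝ) := by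
    intro k hk
    obtain ⟨hkS, hk⟩ := hD k hk
    have h1 := C.de x hx k hkS
    have h2 : (D x k * e x k)^2 = m * (1 - m) := by
      rw [mul_pow, hk]; congr 1; linarith
    have h3 : w^2 = m * (1 - m) := Real.sq_sqrt (by rw [← h2]; positivity)
    have : (D x k * e x k)^2 = w^2 := by rw [h2, h3]
    rcases sq_eq_sq_iff_eq_or_eq_neg.1 this with h | h <;> simp [h]
  have hinj : Set.InjOn (fun k => D x k * e x k) (nb S x : Set E4) := by
    intro k hk l hl h
    obtain ⟨hkS, hk⟩ := hD k hk
    obtain ⟨hlS, hl⟩ := hD l hl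
    simp only at h
    by_contra hne
    have h0 := C.ne k hkS l hlS hne
    have hm := C.mpos
    have hk0 : D x k ≠ 0 := by rintro h; rw [h] at hk; norm_num at hk; linarith
    have hl0 : D x l ≠ 0 := by rintro h; rw [h] at hl; norm_num at hl; linarith
    have : D x k * D x l * D k l = 0 := by
      rw [C.dk x hx k hkS l hlS]
      linear_combination (D x k * e x k) * hl - (D x l * e x l) * hk + m * h
    exact mul_ne_zero (mul_ne_zero hk0 hl0) h0 this
  calc (nb S x).card ≤ ({w, -w} : Finset ℝ).card := Finset.card_le_card_of_injOn _ hmap hinj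
    _ ≤ 2 := Finset.card_le_two

lemma Circ.edg_le {S : Finset E4} {D e : E4 → E4 → ℝ} {m : ℝ} (C : Circ S D e m) :
    (edg S).card ≤ S.card := by
  have h := two_edg_le S
  have h2 : ∑ x ∈ S, (nb S x).card ≤ ∑ x ∈ S, 2 := Finset.sum_le_sum fun x hx => C.deg hx
  simp at h2
  omega

lemma Circ.tri {S : Finset E4} {D e : E4 → E4 → ℝ} {m : ℝ} (C : Circ S D e m)
    (ht : (unitTriangles S).Nonempty) : (edg S).card ≤ 3 ∧ (unitTriangles S).card ≤ 1 := by
  obtain ⟨s, hs⟩ := ht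
  obtain ⟨x, hx, y, hy, z, hz, hxy, hxz, hyz, rfl⟩ := mem_uT.1 hs
  have nxy : x ≠ y := by rintro rfl; simp at hxy
  have nxz : x ≠ z := by rintro rfl; simp at hxz
  have nyz : y ≠ z := by rintro rfl; simp at hyz
  have hc : ({x, y, z} : Finset E4).card = 3 := Finset.card_eq_three.2 ⟨x, y, z, nxy, nxz, nyz, rfl⟩
  -- neighbours of a vertex of the triangle
  have deg : ∀ p q r l : E4, p ∈ S → q ∈ S → r ∈ S → l ∈ S → q ≠ r → ‖p - q‖ = 1 → ‖p - r‖ = 1 →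
      ‖p - l‖ = 1 → l = q ∨ l = r := by
    intro p q r l hp hq hr hl hqr h1 h2 h3
    by_contra hcon
    push Not at hcon
    have hsub : ({l, q, r} : Finset E4) ⊆ nb S p := by
      intro t ht
      simp only [Finset.mem_insert, Finset.mem_singleton] at ht
      rw [norm_sub_rev] at h1 h2 h3
      rcases ht with rfl | rfl | rfl <;> exact mem_nb.2 ⟨by assumption, by assumption⟩
    have := Finset.card_le_card hsub
    rw [Finset.card_eq_three.2 ⟨l, q, r, hcon.1, hcon.2, hqr, rfl⟩] at this
    have := C.deg hp
    omega
  have hyx : ‖y - x‖ = 1 := by rw [norm_sub_rev]; exact hxy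
  have hzx : ‖z - x‖ = 1 := by rw [norm_sub_rev]; exact hxz
  have hzy : ‖z - y‖ = 1 := by rw [norm_sub_rev]; exact hyz
  have in1 : ∀ k ∈ S, ∀ l ∈ S, ‖k - l‖ = 1 → (k = x ∨ k = y ∨ k = z) → (l = x ∨ l = y ∨ l = z) := by
    rintro k hk l hl hkl (rfl | rfl | rfl)
    · rcases deg _ y z l hk hy hz hl nyz hxy hxz hkl with h | h <;> simp [h]
    · rcases deg _ x z l hk hx hz hl nxz hyx hyz hkl with h | h <;> simp [h]
    · rcases deg _ x y l hk hx hy hl nxy hzx hzy hkl with h | h <;> simp [h]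
  have in2 : ∀ k ∈ S, ∀ l ∈ S, ‖k - l‖ = 1 → (k = x ∨ k = y ∨ k = z) := by
    intro k hk l hl hkl
    by_contra hcon
    have hl' : ¬ (l = x ∨ l = y ∨ l = z) := fun h =>
      hcon (in1 l hl k hk (by rw [norm_sub_rev]; exact hkl) h)
    push Not at hcon hl'
    have q1 := C.Q hx hy hk hl hxy hkl hcon.1 hcon.2.1 hl'.1 hl'.2.1
    have q2 := C.Q hx hz hk hl hxz hkl hcon.1 hcon.2.2 hl'.1 hl'.2.2
    have q3 := C.Q hy hz hk hl hyz hkl hcon.2.1 hcon.2.2 hl'.2.1 hl'.2.2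
    have h12 := mul_pos_of_neg_of_neg q1 q2
    have h123 := mul_neg_of_pos_of_neg h12 q3
    have : 0 ≤ (D x k * D y k * D z k * (D x l * D y l * D z l))^2 := sq_nonneg _
    nlinarith
  have in3 : ∀ k ∈ S, ∀ l ∈ S, ‖k - l‖ = 1 → k ∈ ({x, y, z} : Finset E4) := by
    intro k hk l hl h
    simpa using in2 k hk l hl h
  constructor
  · have : edg S ⊆ ({x, y, z} : Finset E4).powersetCard 2 := by
      intro t ht
      have hct : t.card = 2 := by
        simp only [edg, Finset.mem_filter, Finset.mem_powersetCard] at ht; exact ht.1.2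
      obtain ⟨k, hk, l, hl, hkl, rfl⟩ := mem_edg_pair.1 ht
      rw [Finset.mem_powersetCard]
      refine ⟨?_, hct⟩
      intro u hu
      rw [Finset.mem_insert, Finset.mem_singleton] at hu
      rcases hu with rfl | rfl
      · exact in3 _ hk _ hl hkl
      · exact in3 _ hl _ hk (by rw [norm_sub_rev]; exact hkl)
    have := Finset.card_le_card this
    rw [Finset.card_powersetCard, hc] at this
    simpa using this
  · have : unitTriangles S ⊆ {({x, y, z} : Finset E4)} := by
      intro t ht
      have hct : t.card = 3 := by
        simp only [unitTriangles, Finset.mem_filter, Finset.mem_powersetCard] at ht; exact ht.1.2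
      obtain ⟨k, hk, l, hl, j, hj, hkl, hkj, hlj, rfl⟩ := mem_uT.1 ht
      rw [Finset.mem_singleton]
      apply Finset.eq_of_subset_of_card_le
      · intro u hu
        simp only [Finset.mem_insert, Finset.mem_singleton] at hu
        rcases hu with rfl | rfl | rfl
        · exact in3 _ hk _ hl hkl
        · exact in3 _ hl _ hj hlj
        · exact in3 _ hj _ hl (by rw [norm_sub_rev]; exact hlj)
      · rw [hc, hct]
    have := Finset.card_le_card this
    simpa using this

lemma Circ.odd {S : Finset E4} {D e : E4 → E4 → ℝ} {m : ℝ} (C : Circ S D e m)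
    (hne : S.Nonempty) (he : (edg S).card = S.card) :
    S.card % 2 = 1 := by
  have hdeg : ∀ x ∈ S, (nb S x).card = 2 := by
    by_contra hcon
    push Not at hcon
    obtain ⟨x, hx, hx2⟩ := hcon
    have hlt : ∑ x ∈ S, (nb S x).card < ∑ x ∈ S, 2 :=
      Finset.sum_lt_sum (fun x hx => C.deg hx) ⟨x, hx, lt_of_le_of_ne (C.deg hx) hx2⟩
    have h := two_edg_le S
    simp at hlt
    omega
  obtain ⟨x, hx⟩ := hne
  obtain ⟨y, x', hyx', hnx⟩ := Finset.card_eq_two.1 (hdeg x hx)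
  have hy : y ∈ S ∧ ‖y - x‖ = 1 := mem_nb.1 (by rw [hnx]; simp)
  have hx' : x' ∈ S ∧ ‖x' - x‖ = 1 := mem_nb.1 (by rw [hnx]; simp)
  have hxny : x ∈ nb S y := mem_nb.2 ⟨hx, by rw [norm_sub_rev]; exact hy.2⟩
  obtain ⟨y', hy'0⟩ : ∃ y', (nb S y).erase x = {y'} := by
    rw [← Finset.card_eq_one, Finset.card_erase_of_mem hxny, hdeg y hy.1]
  have hy'm : y' ∈ (nb S y).erase x := by rw [hy'0]; simp
  rw [Finset.mem_erase, mem_nb] at hy'm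
  obtain ⟨hy'x, hy'S, hy'y⟩ := hy'm
  have hxx' : ‖x - x'‖ = 1 := by rw [norm_sub_rev]; exact hx'.2
  have hxy : ‖x - y‖ = 1 := by rw [norm_sub_rev]; exact hy.2
  have hyy' : ‖y - y'‖ = 1 := by rw [norm_sub_rev]; exact hy'y
  have nxy : x ≠ y := by rintro rfl; simp at hxy
  have nxx' : x ≠ x' := by rintro rfl; simp at hxx'
  have nyy' : y ≠ y' := by rintro rfl; simp at hyy'
  set σ : E4 → ℝ := fun k => D x k * D y k with hσ
  have hσ0 : ∀ k ∈ S, k ≠ x → k ≠ y → σ k ≠ 0 := fun k hk h1 h2 =>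
    mul_ne_zero (C.ne x hx k hk h1.symm) (C.ne y hy.1 k hk h2.symm)
  have hDii : ∀ i, D i i = 0 := fun i => by have := C.anti i i; linarith
  have hσx : σ x = 0 := by simp [hσ, hDii]
  have hσy : σ y = 0 := by simp [hσ, hDii]
  have hσx' := hσ0 x' hx'.1 nxx'.symm hyx'.symm
  have hσxx : 0 < σ x' * σ x' := mul_self_pos.2 hσx'
  have hσxy : 0 < σ x' * σ y' := C.ii hx hy.1 hx'.1 hy'S hxx' hyy' hy'x.symm hyx'
  set L := S.filter (fun k => 0 < σ x' * σ k) with hL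
  set R := S.filter (fun k => σ x' * σ k < 0) with hR
  set Z := S.filter (fun k => σ x' * σ k = 0) with hZ
  have mL : ∀ k, k ∈ L ↔ k ∈ S ∧ 0 < σ x' * σ k := fun k => by rw [hL, Finset.mem_filter]
  have mR : ∀ k, k ∈ R ↔ k ∈ S ∧ σ x' * σ k < 0 := fun k => by rw [hR, Finset.mem_filter]
  have mZ : ∀ k, k ∈ Z ↔ k ∈ S ∧ σ x' * σ k = 0 := fun k => by rw [hZ, Finset.mem_filter]
  have hZxy : Z = {x, y} := by
    ext k
    rw [mZ, Finset.mem_insert, Finset.mem_singleton]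
    constructor
    · rintro ⟨hk, h⟩
      by_contra hcon
      push Not at hcon
      exact mul_ne_zero hσx' (hσ0 k hk hcon.1 hcon.2) h
    · rintro (rfl | rfl)
      · exact ⟨hx, by rw [hσx, mul_zero]⟩
      · exact ⟨hy.1, by rw [hσy, mul_zero]⟩
  have hZc : Z.card = 2 := by rw [hZxy]; exact Finset.card_pair nxy
  have hQ : ∀ k ∈ S, ∀ l ∈ S, ‖k - l‖ = 1 → σ x' * σ k ≠ 0 → σ x' * σ l ≠ 0 →
      (σ x' * σ k) * (σ x' * σ l) < 0 := by
    intro k hk l hl hkl h1 h2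
    have hh : ∀ t, σ x' * σ t ≠ 0 → t ≠ x ∧ t ≠ y := by
      intro t h
      constructor
      · rintro rfl; exact h (by rw [hσx, mul_zero])
      · rintro rfl; exact h (by rw [hσy, mul_zero])
    have := C.Q hx hy.1 hk hl hxy hkl (hh k h1).1 (hh k h1).2 (hh l h2).1 (hh l h2).2
    calc (σ x' * σ k) * (σ x' * σ l) = (σ x' * σ x') * (σ k * σ l) := by ring
      _ < 0 := mul_neg_of_pos_of_neg hσxx this
  have hcS : S.card = L.card + (R.card + 2) := by
    have h1 := Finset.card_filter_add_card_filter_not (s := S) (fun k => 0 < σ x' * σ k)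
    have h2 := Finset.card_filter_add_card_filter_not
      (s := S.filter (fun k => ¬ 0 < σ x' * σ k)) (fun k => σ x' * σ k < 0)
    have h3 : (S.filter (fun k => ¬ 0 < σ x' * σ k)).filter (fun k => σ x' * σ k < 0) = R := by
      ext k
      rw [Finset.mem_filter, Finset.mem_filter, mR]
      constructor
      · rintro ⟨⟨a, b⟩, c⟩; exact ⟨a, c⟩
      · rintro ⟨a, c⟩; exact ⟨⟨a, by linarith⟩, c⟩
    have h4 : (S.filter (fun k => ¬ 0 < σ x' * σ k)).filter (fun k => ¬ σ x' * σ k < 0) = Z := by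
      ext k
      rw [Finset.mem_filter, Finset.mem_filter, mZ]
      constructor
      · rintro ⟨⟨a, b⟩, c⟩; exact ⟨a, by linarith⟩
      · rintro ⟨a, c⟩; exact ⟨⟨a, by linarith⟩, by linarith⟩
    rw [h3, h4, hZc] at h2
    rw [h2]; exact h1.symm
  -- double counting
  have hdc := Finset.sum_card_bipartiteAbove_eq_sum_card_bipartiteBelow
    (s := L) (t := R ∪ {x, y}) (fun k l => ‖k - l‖ = 1)
  have hl : ∀ k ∈ L, ((R ∪ {x, y}).bipartiteAbove (fun k l => ‖k - l‖ = 1) k).card = 2 := by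
    intro k hk
    obtain ⟨hkS, hk0⟩ := (mL k).1 hk
    rw [← hdeg k hkS]
    congr 1
    ext l
    rw [Finset.bipartiteAbove, Finset.mem_filter, mem_nb, Finset.mem_union, ← hZxy, mR, mZ, norm_sub_rev]
    constructor
    · rintro ⟨h | h, h'⟩ <;> exact ⟨h.1, h'⟩
    · rintro ⟨h, h'⟩
      refine ⟨?_, h'⟩
      by_cases h0 : σ x' * σ l = 0
      · exact Or.inr ⟨h, h0⟩
      · left
        refine ⟨h, ?_⟩
        have := hQ k hkS l h (by rw [norm_sub_rev]; exact h') hk0.ne' h0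
        by_contra hc
        push Not at hc
        have := mul_nonneg hk0.le hc
        linarith
  have hnbL : ∀ l, L.bipartiteBelow (fun k l => ‖k - l‖ = 1) l = nb L l := by
    intro l; ext k; rw [Finset.bipartiteBelow, Finset.mem_filter, mem_nb]
  have hr : ∀ l ∈ R, (L.bipartiteBelow (fun k l => ‖k - l‖ = 1) l).card = 2 := by
    intro l hl
    obtain ⟨hlS, hl0⟩ := (mR l).1 hl
    rw [← hdeg l hlS, hnbL]
    congr 1
    ext k
    rw [mem_nb, mem_nb, mL]
    constructor
    · rintro ⟨h, h'⟩; exact ⟨h.1, h'⟩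
    · rintro ⟨h, h'⟩
      refine ⟨⟨h, ?_⟩, h'⟩
      by_cases h0 : σ x' * σ k = 0
      · exfalso
        have : k ∈ Z := (mZ k).2 ⟨h, h0⟩
        rw [hZxy, Finset.mem_insert, Finset.mem_singleton] at this
        rcases this with rfl | rfl
        · have : l ∈ nb S k := mem_nb.2 ⟨hlS, by rw [norm_sub_rev]; exact h'⟩
          rw [hnx, Finset.mem_insert, Finset.mem_singleton] at this
          rcases this with rfl | rfl
          · rw [hσy] at hl0; simp at hl0
          · linarith
        · have : l ∈ (nb S k).erase x := by
            rw [Finset.mem_erase]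
            refine ⟨?_, mem_nb.2 ⟨hlS, by rw [norm_sub_rev]; exact h'⟩⟩
            rintro rfl
            rw [hσx] at hl0; simp at hl0
          rw [hy'0, Finset.mem_singleton] at this
          rw [this] at hl0
          linarith
      · have := hQ k h l hlS h' h0 hl0.ne
        by_contra hc
        push Not at hc
        have := mul_nonneg_of_nonpos_of_nonpos hc hl0.le
        linarith
  have hxL : (L.bipartiteBelow (fun k l => ‖k - l‖ = 1) x).card = 1 := by
    rw [hnbL, Finset.card_eq_one]
    refine ⟨x', ?_⟩
    ext k
    rw [mem_nb, mL, Finset.mem_singleton]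
    constructor
    · rintro ⟨⟨h, h0⟩, h'⟩
      have : k ∈ nb S x := mem_nb.2 ⟨h, h'⟩
      rw [hnx, Finset.mem_insert, Finset.mem_singleton] at this
      rcases this with rfl | rfl
      · rw [hσy] at h0; simp at h0
      · rfl
    · rintro rfl; exact ⟨⟨hx'.1, hσxx⟩, hx'.2⟩
  have hyL : (L.bipartiteBelow (fun k l => ‖k - l‖ = 1) y).card = 1 := by
    rw [hnbL, Finset.card_eq_one]
    refine ⟨y', ?_⟩
    ext k
    rw [mem_nb, mL, Finset.mem_singleton]
    constructor
    · rintro ⟨⟨h, h0⟩, h'⟩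
      have : k ∈ (nb S y).erase x := by
        rw [Finset.mem_erase]
        refine ⟨?_, mem_nb.2 ⟨h, h'⟩⟩
        rintro rfl
        rw [hσx] at h0; simp at h0
      rw [hy'0, Finset.mem_singleton] at this
      exact this
    · rintro rfl; exact ⟨⟨hy'S, hσxy⟩, hy'y⟩
  have hdisj : Disjoint R {x, y} := by
    rw [← hZxy, Finset.disjoint_left]
    intro k hk hk'
    have := (mR k).1 hk
    have := (mZ k).1 hk'
    linarith
  rw [Finset.sum_congr rfl hl, Finset.sum_union hdisj, Finset.sum_congr rfl hr, Finset.sum_pair nxy,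
    hxL, hyL] at hdc
  simp at hdc
  omega

lemma circ_one (S : Finset E4) (x y : E4 → ℝ) (ρ : ℝ) (hρ : 1/2 ≤ ρ)
    (hc : ∀ a ∈ S, x a ^2 + y a ^2 = ρ) (hd : DiamOne S)
    (hn : ∀ a ∈ S, ∀ b ∈ S, ‖a - b‖^2 = (x a - x b)^2 + (y a - y b)^2) :
    (edg S).card ≤ 1 := by
  set dot : E4 → E4 → ℝ := fun a b => x a * x b + y a * y b with hdot
  set cr : E4 → E4 → ℝ := fun a b => x a * y b - y a * x b with hcr
  have hcra : ∀ a b, cr a b = - cr b a := fun a b => by simp only [hcr]; ring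
  have hdota : ∀ a b, dot a b = dot b a := fun a b => by simp only [hdot]; ring
  have hnd : ∀ a ∈ S, ∀ b ∈ S, ‖a - b‖^2 = 2 * ρ - 2 * dot a b := by
    intro a ha b hb
    rw [hn a ha b hb]; simp only [hdot]; linear_combination hc a ha + hc b hb
  have hge : ∀ a ∈ S, ∀ b ∈ S, ρ - 1/2 ≤ dot a b := by
    intro a ha b hb
    have h1 := (le_one_iff_sq a b).1 (hd a ha b hb)
    rw [hnd a ha b hb] at h1; linarith
  have hle : ∀ a ∈ S, ∀ b ∈ S, dot a b ≤ ρ := by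
    intro a ha b hb
    have := hnd a ha b hb
    have := sq_nonneg ‖a - b‖
    linarith
  have hpy : ∀ a ∈ S, ∀ b ∈ S, dot a b ^2 + cr a b ^2 = ρ^2 := by
    intro a ha b hb
    simp only [hdot, hcr]
    calc _ = (x a ^2 + y a ^2) * (x b^2 + y b^2) := by ring
      _ = ρ^2 := by rw [hc a ha, hc b hb, sq]
  have key : ∀ i ∈ S, ∀ j ∈ S, ∀ k ∈ S, ‖i - j‖ = 1 → 0 < cr i j → 0 ≤ cr i k ∧ 0 ≤ cr k j := by
    intro i hi j hj k hk hij hp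
    have h1 : dot i j = ρ - 1/2 := by
      have := (one_iff_sq i j).1 hij
      rw [hnd i hi j hj] at this; linarith
    have e1 : ρ * dot k j = dot i k * dot i j + cr i k * cr i j := by
      rw [← hc i hi]; simp only [hdot, hcr]; ring
    have e2 : ρ * dot i k = dot k j * dot i j + cr k j * cr i j := by
      rw [← hc j hj]; simp only [hdot, hcr]; ring
    have g1 := hge i hi k hk
    have g2 := hge k hk j hj
    have g3 := hle i hi k hk
    have g4 := hle k hk j hj
    rw [h1] at e1 e2
    constructor
    · by_contra hcon
      push Not at hcon
      have := mul_neg_of_neg_of_pos hcon hp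
      nlinarith
    · by_contra hcon
      push Not at hcon
      have := mul_neg_of_neg_of_pos hcon hp
      nlinarith
  have orient : ∀ e ∈ edg S, ∃ i ∈ S, ∃ j ∈ S, ‖i - j‖ = 1 ∧ 0 < cr i j ∧ e = {i, j} := by
    intro e he
    obtain ⟨i, hi, j, hj, hij, rfl⟩ := mem_edg_pair.1 he
    have h1 : dot i j = ρ - 1/2 := by
      have := (one_iff_sq i j).1 hij
      rw [hnd i hi j hj] at this; linarith
    have h2 := hpy i hi j hj
    have h3 : cr i j ≠ 0 := by
      intro h
      rw [h1, h] at h2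
      nlinarith
    rcases lt_or_gt_of_ne h3 with h | h
    · exact ⟨j, hj, i, hi, by rw [norm_sub_rev]; exact hij, by rw [hcra]; linarith,
        Finset.pair_comm _ _⟩
    · exact ⟨i, hi, j, hj, hij, h, rfl⟩
  have eqz : ∀ i ∈ S, ∀ k ∈ S, cr i k = 0 → i = k := by
    intro i hi k hk h
    have h2 := hpy i hi k hk
    have g1 := hge i hi k hk
    have : dot i k = ρ := by rw [h] at h2; nlinarith
    apply ext_of_nsq
    rw [hnd i hi k hk, this]; ring
  rw [Finset.card_le_one]
  intro e he f hf
  obtain ⟨i, hi, j, hj, hij, hp, rfl⟩ := orient e he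
  obtain ⟨k, hk, l, hl, hkl, hq, rfl⟩ := orient f hf
  have a1 := (key i hi j hj k hk hij hp).1
  have a2 := (key k hk l hl i hi hkl hq).1
  have a3 := (key i hi j hj l hl hij hp).2
  have a4 := (key k hk l hl j hj hkl hq).2
  have b1 : i = k := eqz i hi k hk (by have := hcra i k; linarith)
  have b2 : l = j := eqz l hl j hj (by have := hcra l j; linarith)
  rw [b1, b2]

lemma no_tri_of_edg (S : Finset E4) (h : (edg S).card ≤ 1) : unitTriangles S = ∅ := by
  by_contra hne
  obtain ⟨s, hs⟩ := Finset.nonempty_iff_ne_empty.2 hne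
  obtain ⟨x, hx, y, hy, z, hz, hxy, hxz, hyz, rfl⟩ := mem_uT.1 hs
  have nyz : y ≠ z := by rintro rfl; simp at hyz
  have nxy : x ≠ y := by rintro rfl; simp at hxy
  have := Finset.card_le_one.1 h {x, y} (mem_edg_pair.2 ⟨x, hx, y, hy, hxy, rfl⟩) {x, z}
    (mem_edg_pair.2 ⟨x, hx, z, hz, hxz, rfl⟩)
  have hm : y ∈ ({x, z} : Finset E4) := by rw [← this]; simp
  simp at hm
  rcases hm with h | h
  · exact nxy h.symm
  · exact nyz h

lemma half_angle (X Y : ℝ) (h : X^2 + Y^2 = 1) : ∃ t : ℝ, X = Real.cos (2*t) ∧ Y = Real.sin (2*t) := by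
  have hz : ‖(⟨X, Y⟩ : ℂ)‖ = 1 := by
    rw [Complex.norm_def, Complex.normSq_mk, show X * X + Y * Y = 1 by linarith]; simp
  have hz0 : (⟨X, Y⟩ : ℂ) ≠ 0 := by
    intro h0; rw [h0] at hz; simp at hz
  refine ⟨Complex.arg ⟨X, Y⟩ / 2, ?_, ?_⟩
  · rw [mul_div_cancel₀ _ two_ne_zero, Complex.cos_arg hz0, hz]; simp
  · rw [mul_div_cancel₀ _ two_ne_zero, Complex.sin_arg, hz]; simp

lemma circ_mk (S : Finset E4) (x y : E4 → ℝ) (ρ : ℝ) (hρ : 0 < ρ)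
    (hc : ∀ a ∈ S, x a ^2 + y a ^2 = ρ) (hd : DiamOne S)
    (hn : ∀ a ∈ S, ∀ b ∈ S, ‖a - b‖^2 = (x a - x b)^2 + (y a - y b)^2) :
    ∃ D e m, Circ S D e m := by
  have hr : Real.sqrt ρ ^2 = ρ := Real.sq_sqrt hρ.le
  have hr0 : 0 < Real.sqrt ρ := Real.sqrt_pos.2 hρ
  set r := Real.sqrt ρ with hrdef
  have : ∀ a : E4, ∃ t : ℝ, a ∈ S → x a = r * Real.cos (2*t) ∧ y a = r * Real.sin (2*t) := by
    intro a
    by_cases ha : a ∈ S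
    · obtain ⟨t, h1, h2⟩ := half_angle (x a / r) (y a / r) (by
        rw [div_pow, div_pow, ← add_div, hc a ha, hr, div_self hρ.ne'])
      refine ⟨t, fun _ => ⟨?_, ?_⟩⟩
      · rw [← h1]; field_simp
      · rw [← h2]; field_simp
    · exact ⟨0, fun h => absurd h ha⟩
  choose t ht using this
  have hD : ∀ i ∈ S, ∀ j ∈ S, ‖i - j‖^2 = 4 * ρ * (Real.cos (t i) * Real.sin (t j) - Real.sin (t i) * Real.cos (t j))^2 := by
    intro i hi j hj
    rw [hn i hi j hj, (ht i hi).1, (ht i hi).2, (ht j hj).1, (ht j hj).2, ← hr]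
    simp only [Real.cos_two_mul', Real.sin_two_mul]
    have h1 := Real.sin_sq_add_cos_sq (t i)
    have h2 := Real.sin_sq_add_cos_sq (t j)
    generalize Real.sin (t i) = s1 at *
    generalize Real.cos (t i) = c1 at *
    generalize Real.sin (t j) = s2 at *
    generalize Real.cos (t j) = c2 at *
    have e1 : s1^2 = 1 - c1^2 := by linarith
    have e2 : s2^2 = 1 - c2^2 := by linarith
    have : (r * (c1 ^ 2 - s1 ^ 2) - r * (c2 ^ 2 - s2 ^ 2)) ^ 2 + (r * (2 * s1 * c1) - r * (2 * s2 * c2)) ^ 2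
      = r^2 * ((c1^2+s1^2)^2 + (c2^2+s2^2)^2 - 2 * ((c1*c2+s1*s2)^2 - (c1*s2-s1*c2)^2)) := by ring
    rw [this]
    have h3 : (c1*c2+s1*s2)^2 = (c1^2+s1^2)*(c2^2+s2^2) - (c1*s2-s1*c2)^2 := by ring
    rw [h3, show c1^2+s1^2 = 1 by linarith, show c2^2+s2^2=1 by linarith]; ring
  refine ⟨fun i j => Real.cos (t i) * Real.sin (t j) - Real.sin (t i) * Real.cos (t j),
    fun i j => Real.cos (t i) * Real.cos (t j) + Real.sin (t i) * Real.sin (t j), 1 / (4 * ρ), ?_⟩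
  constructor
  · intro i j; ring
  · intro x y k l; ring
  · intro i hi j hj hij h
    apply hij
    apply ext_of_nsq
    rw [hD i hi j hj, h]; ring
  · intro i hi j hj
    have := (le_one_iff_sq i j).1 (hd i hi j hj)
    rw [hD i hi j hj] at this
    rw [le_div_iff₀ (by positivity)]; linarith
  · intro i hi j hj
    rw [one_iff_sq, hD i hi j hj, eq_div_iff (by positivity), mul_comm]
  · positivity
  · intro i hi j hj
    have h1 := Real.sin_sq_add_cos_sq (t i)
    have h2 := Real.sin_sq_add_cos_sq (t j)
    calc _ = (Real.sin (t i)^2 + Real.cos (t i)^2) * (Real.sin (t j)^2 + Real.cos (t j)^2) := by ring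
      _ = 1 := by rw [h1, h2]; norm_num
  · intro x hx k hk l hl
    have h1 := Real.sin_sq_add_cos_sq (t x)
    linear_combination (-(Real.cos (t k) * Real.sin (t l) - Real.sin (t k) * Real.cos (t l))) * h1

lemma uT_union (A B : Finset E4) :
    (unitTriangles (A ∪ B)).card ≤ (unitTriangles A).card + (unitTriangles B).card
      + A.card * (edg B).card + B.card * (edg A).card := by
  have hsub : unitTriangles (A ∪ B) ⊆ ((unitTriangles A ∪ unitTriangles B) ∪
      (A ×ˢ edg B).image (fun p => insert p.1 p.2)) ∪ (B ×ˢ edg A).image (fun p => insert p.1 p.2) := by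
    intro s hs
    obtain ⟨x, hx, y, hy, z, hz, hxy, hxz, hyz, rfl⟩ := mem_uT.1 hs
    have mk : ∀ (P Q : Finset E4) (p q r : E4), p ∈ P → q ∈ Q → r ∈ Q → ‖q - r‖ = 1 →
        ({p, q, r} : Finset E4) ∈ (P ×ˢ edg Q).image (fun p => insert p.1 p.2) := by
      intro P Q p q r hp hq hr hqr
      rw [Finset.mem_image]
      exact ⟨(p, {q, r}), Finset.mem_product.2 ⟨hp, mem_edg_pair.2 ⟨q, hq, r, hr, hqr, rfl⟩⟩, rfl⟩
    have e1 : ({x, y, z} : Finset E4) = {y, x, z} := by ext; simp; tauto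
    have e2 : ({x, y, z} : Finset E4) = {z, x, y} := by ext; simp; tauto
    rw [Finset.mem_union] at hx hy hz
    simp only [Finset.mem_union]
    rcases hx with hx | hx <;> rcases hy with hy | hy <;> rcases hz with hz | hz
    · exact Or.inl (Or.inl (Or.inl (mem_uT.2 ⟨x, hx, y, hy, z, hz, hxy, hxz, hyz, rfl⟩)))
    · right; rw [e2]; exact mk _ _ _ _ _ hz hx hy hxy
    · right; rw [e1]; exact mk _ _ _ _ _ hy hx hz hxz
    · left; right; exact mk _ _ _ _ _ hx hy hz hyz
    · right; exact mk _ _ _ _ _ hx hy hz hyz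
    · left; right; rw [e1]; exact mk _ _ _ _ _ hy hx hz hxz
    · left; right; rw [e2]; exact mk _ _ _ _ _ hz hx hy hxy
    · exact Or.inl (Or.inl (Or.inr (mem_uT.2 ⟨x, hx, y, hy, z, hz, hxy, hxz, hyz, rfl⟩)))
  refine (Finset.card_le_card hsub).trans ?_
  refine (Finset.card_union_le _ _).trans ?_
  refine add_le_add ((Finset.card_union_le _ _).trans (add_le_add (Finset.card_union_le _ _) ?_)) ?_
  · exact Finset.card_image_le.trans (by rw [Finset.card_product])
  · exact Finset.card_image_le.trans (by rw [Finset.card_product])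

/-- The real form of `F₃`. -/
lemma F3_real (n : ℕ) (hn : 2 ≤ n) : ((n : ℝ)^2/4 + n/2 - 3/4 ≤ F₃ n) ∧ ((F₃ n : ℝ) ≤ (n:ℝ)^2/4 + n/2 + 1/4) := by
  obtain ⟨k, hk | hk | hk | hk⟩ : ∃ k, n = 4*k ∨ n = 4*k+1 ∨ n = 4*k+2 ∨ n = 4*k+3 := ⟨n/4, by omega⟩
  · have : F₃ n = 4*k^2 + 2*k := by
      obtain ⟨j, rfl⟩ : ∃ j, k = j + 1 := ⟨k-1, by omega⟩
      unfold F₃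
      rw [if_neg (by omega), if_neg (by omega), hk, show 4 * (j+1) - 2 = 4*j+2 by omega,
        show 4*(j+1)*(4*j+2) = 4 * ((j+1)*(4*j+2)) by ring, Nat.mul_div_cancel_left _ (by norm_num)]
      ring
    rw [this, hk]; push_cast
    constructor <;> nlinarith
  · have : F₃ n = 4*k^2 + 4*k + 1 := by
      unfold F₃
      rw [if_pos (by omega), hk, show 4 * k + 1 - 1 = 4*k by omega,
        show (4*k)^2 = 4 * (4*k^2) by ring, Nat.mul_div_cancel_left _ (by norm_num)]
      ring
    rw [this, hk]; push_cast
    constructor <;> nlinarith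
  · have : F₃ n = 4*k^2 + 6*k + 2 := by
      unfold F₃
      rw [if_neg (by omega), if_neg (by omega), hk, show 4 * k + 2 - 2 = 4*k by omega,
        show (4*k+2) * (4*k) = 4 * ((4*k+2)*k) by ring, Nat.mul_div_cancel_left _ (by norm_num)]
      ring
    rw [this, hk]; push_cast
    constructor <;> nlinarith
  · have : F₃ n = 4*k^2 + 8*k + 3 := by
      unfold F₃
      rw [if_neg (by omega), if_pos (by omega), hk, show 4 * k + 3 - 1 = 4*k+2 by omega,
        show (4*k+2)^2 = 4 * ((2*k+1)^2) by ring, Nat.mul_div_cancel_left _ (by norm_num)]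
      rw [show (2*k+1)^2 + (4*k+3) = (4*k^2 + 8*k + 3) + 1 by ring]; rfl
    rw [this, hk]; push_cast
    constructor <;> nlinarith

lemma F3_val (n : ℕ) (hn : 2 ≤ n) : (n % 4 = 1 → 4 * F₃ n = n^2 + 2*n + 1) ∧
    (n % 4 = 3 → 4 * F₃ n + 3 = n^2 + 2*n) ∧ (n % 2 = 0 → 4 * F₃ n = n^2 + 2*n) := by
  have hr := F3_real n hn
  obtain ⟨k, hk | hk | hk | hk⟩ : ∃ k, n = 4*k ∨ n = 4*k+1 ∨ n = 4*k+2 ∨ n = 4*k+3 := ⟨n/4, by omega⟩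
  all_goals
    refine ⟨fun h => ?_, fun h => ?_, fun h => ?_⟩
    all_goals first | (exfalso; omega) | skip
    subst hk
    rw [← @Nat.cast_inj ℝ] 
    have h2 : ∀ u v : ℕ, (u : ℝ) < v + 1 → u ≤ v := fun u v h => by
      have : u < v + 1 := by exact_mod_cast h
      omega
    push_cast at hr ⊢
  · have : F₃ (4*k) = 4*k^2 + 2*k := by
      apply le_antisymm
      · apply h2; push_cast; nlinarith [hr.2]
      · apply h2; push_cast; nlinarith [hr.1]
    rw [this]; push_cast; ring
  · have : F₃ (4*k+1) = 4*k^2 + 4*k + 1 := by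
      unfold F₃
      rw [if_pos (by omega), show 4 * k + 1 - 1 = 4*k by omega,
        show (4*k)^2 = 4 * (4*k^2) by ring, Nat.mul_div_cancel_left _ (by norm_num)]
      ring
    rw [this]; push_cast; ring
  · have : F₃ (4*k+2) = 4*k^2 + 6*k + 2 := by
      apply le_antisymm
      · apply h2; push_cast; nlinarith [hr.2]
      · apply h2; push_cast; nlinarith [hr.1]
    rw [this]; push_cast; ring
  · have : F₃ (4*k+3) = 4*k^2 + 8*k + 3 := by
      unfold F₃
      rw [if_neg (by omega), if_pos (by omega), show 4 * k + 3 - 1 = 4*k+2 by omega,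
        show (4*k+2)^2 = 4 * ((2*k+1)^2) by ring, Nat.mul_div_cancel_left _ (by norm_num)]
      rw [show (2*k+1)^2 + (4*k+3) = (4*k^2 + 8*k + 3) + 1 by ring]; rfl
    rw [this]; push_cast; ring

lemma F3_prod (a b : ℕ) (hl : 2 ≤ a + b) (hb : b % 2 = 1) : b * (a + 1) ≤ F₃ (a + b) := by
  obtain ⟨h1, h2, h3⟩ := F3_val (a + b) hl
  have hid : (4 * (b * (a + 1)) : ℤ) = ((a:ℤ) + b)^2 + 2 * (a + b) + 1 - ((b:ℤ) - a - 1)^2 := by ring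
  have hcases : (a + b) % 4 = 1 ∨ (a + b) % 4 = 3 ∨ (a + b) % 2 = 0 := by omega
  rcases hcases with h | h | h
  · have := h1 h
    zify at this ⊢
    nlinarith [sq_nonneg ((b:ℤ) - a - 1)]
  · have := h2 h
    zify at this ⊢
    have hsq : 4 ≤ ((b:ℤ) - a - 1)^2 := by
      have : (b:ℤ) - a - 1 ≤ -2 ∨ 2 ≤ (b:ℤ) - a - 1 := by omega
      rcases this with h | h <;> nlinarith
    nlinarith
  · have := h3 h
    zify at this ⊢
    have hsq : 1 ≤ ((b:ℤ) - a - 1)^2 := by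
      have : (b:ℤ) - a - 1 ≤ -1 ∨ 1 ≤ (b:ℤ) - a - 1 := by omega
      rcases this with h | h <;> nlinarith
    nlinarith

lemma lens_half (A B : Finset E4) (hb : 3 ≤ B.card) (hl : 12 ≤ A.card + B.card)
    (hdA : DiamOne A) (hdB : DiamOne B)
    (ρ σ : ℝ) (x y z w : E4 → ℝ) (hρ : 1/2 ≤ ρ)
    (cA : ∀ a ∈ A, x a ^2 + y a ^2 = ρ) (cB : ∀ b ∈ B, z b ^2 + w b ^2 = σ)
    (nA : ∀ a ∈ A, ∀ a' ∈ A, ‖a - a'‖^2 = (x a - x a')^2 + (y a - y a')^2)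
    (nB : ∀ b ∈ B, ∀ b' ∈ B, ‖b - b'‖^2 = (z b - z b')^2 + (w b - w b')^2) :
    (unitTriangles (A ∪ B)).card ≤ F₃ (A.card + B.card) := by
  have eA := circ_one A x y ρ hρ cA hdA nA
  have tA := no_tri_of_edg A eA
  have hU := uT_union A B
  rw [tA, Finset.card_empty] at hU
  have hσ : 0 < σ := by
    obtain ⟨b, hb1, b', hb2, hne⟩ := Finset.one_lt_card.1 (show 1 < B.card by omega)
    have h1 := cB b hb1
    have h2 := cB b' hb2
    rcases lt_or_ge 0 σ with h | h
    · exact h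
    · exfalso
      apply hne
      apply ext_of_nsq
      have z1 : z b = 0 := by nlinarith [sq_nonneg (z b), sq_nonneg (w b)]
      have z2 : w b = 0 := by nlinarith [sq_nonneg (z b), sq_nonneg (w b)]
      have z3 : z b' = 0 := by nlinarith [sq_nonneg (z b'), sq_nonneg (w b')]
      have z4 : w b' = 0 := by nlinarith [sq_nonneg (z b'), sq_nonneg (w b')]
      rw [nB b hb1 b' hb2, z1, z2, z3, z4]; norm_num
  obtain ⟨D, e, m, C⟩ := circ_mk B z w σ hσ cB hdB nB
  set a := A.card
  set b := B.card with hbdef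
  have hF := (F3_real (a + b) (by omega)).1
  have hbe : b * (edg A).card ≤ b := by nlinarith
  have hlR : (12:ℝ) ≤ (a:ℝ) + b := by exact_mod_cast hl
  push_cast at hF
  by_cases ht : (unitTriangles B).Nonempty
  · obtain ⟨h1, h2⟩ := C.tri ht
    have : (unitTriangles (A ∪ B)).card ≤ 3 * a + b + 1 := by nlinarith
    have h3 : ((unitTriangles (A ∪ B)).card : ℝ) ≤ 3 * a + b + 1 := by exact_mod_cast this
    rw [← @Nat.cast_le ℝ]
    have hb0 : (3:ℝ) ≤ b := by exact_mod_cast hb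
    nlinarith
  · rw [Finset.not_nonempty_iff_eq_empty] at ht
    rw [ht, Finset.card_empty] at hU
    rcases Nat.lt_or_ge (edg B).card b with he | he
    · have h1 : a * (edg B).card ≤ a * (b - 1) := Nat.mul_le_mul_left _ (by omega)
      have h2 : (unitTriangles (A ∪ B)).card ≤ a * (b - 1) + b := by omega
      have h3 : ((unitTriangles (A ∪ B)).card : ℝ) ≤ a * ((b:ℝ) - 1) + b := by
        have : ((unitTriangles (A ∪ B)).card : ℝ) ≤ ((a * (b - 1) + b : ℕ) : ℝ) := by exact_mod_cast h2
        rw [Nat.cast_add, Nat.cast_mul, Nat.cast_sub (by omega)] at this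
        simpa using this
      rw [← @Nat.cast_le ℝ]
      nlinarith [sq_nonneg ((b:ℝ) - a - 2)]
    · have he' := le_antisymm C.edg_le he
      have hodd := C.odd (Finset.card_pos.1 (by omega)) he'
      refine le_trans ?_ (F3_prod a b (by omega) hodd)
      rw [he'] at hU
      calc _ ≤ _ := hU
        _ ≤ b * (a + 1) := by rw [← hbdef]; nlinarith

lemma lens_bound (A B : Finset E4) (ha : 3 ≤ A.card) (hb : 3 ≤ B.card) (hl : 12 ≤ A.card + B.card)
    (hdA : DiamOne A) (hdB : DiamOne B)
    (ρ σ : ℝ) (x y z w : E4 → ℝ) (hρ : ρ + σ = 1)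
    (cA : ∀ a ∈ A, x a ^2 + y a ^2 = ρ) (cB : ∀ b ∈ B, z b ^2 + w b ^2 = σ)
    (nA : ∀ a ∈ A, ∀ a' ∈ A, ‖a - a'‖^2 = (x a - x a')^2 + (y a - y a')^2)
    (nB : ∀ b ∈ B, ∀ b' ∈ B, ‖b - b'‖^2 = (z b - z b')^2 + (w b - w b')^2) :
    (unitTriangles (A ∪ B)).card ≤ F₃ (A.card + B.card) := by
  rcases le_total (1/2) ρ with h | h
  · exact lens_half A B hb hl hdA hdB ρ σ x y z w h cA cB nA nB
  · rw [Finset.union_comm, add_comm]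
    exact lens_half B A ha (by omega) hdB hdA σ ρ z w x y (by linarith) cB cA nB nA

/-- Structure theorem: a triple with many common neighbours gives a decomposition. -/
lemma lens_exists (X : Finset E4) (hd : DiamOne X) (s : ℕ) (hs : 12 ≤ s) (u1 u2 u3 : E4)
    (hu1 : u1 ∈ X) (hu2 : u2 ∈ X) (hu3 : u3 ∈ X) (h12 : u1 ≠ u2) (h13 : u1 ≠ u3) (h23 : u2 ≠ u3)
    (hc : s < (cn X {u1, u2, u3}).card) :
    ∃ L ⊆ X, s < L.card ∧ (unitTriangles L).card ≤ F₃ L.card ∧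
      ∀ x ∈ X \ L, (nb L x).card ≤ 4 := by
  set B := cn X {u1, u2, u3} with hB
  set A := cn X B with hA
  have mB : ∀ b, b ∈ B ↔ b ∈ X ∧ ∀ a ∈ ({u1, u2, u3} : Set E4), ‖b - a‖ = 1 := by
    intro b; rw [hB, mem_cn]; simp
  have mA : ∀ a, a ∈ A ↔ a ∈ X ∧ ∀ b ∈ B, ‖a - b‖ = 1 := fun a => by rw [hA, mem_cn]
  have uA : ∀ u ∈ ({u1, u2, u3} : Finset E4), u ∈ A := by
    intro u hu
    rw [mA]
    refine ⟨?_, fun b hb => ?_⟩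
    · simp only [Finset.mem_insert, Finset.mem_singleton] at hu
      rcases hu with rfl | rfl | rfl <;> assumption
    · rw [norm_sub_rev]; exact ((mB b).1 hb).2 u (by simpa using hu)
  have hu1A := uA u1 (by simp)
  have hu2A := uA u2 (by simp)
  have hu3A := uA u3 (by simp)
  have hA3 : 3 ≤ A.card := by
    rw [← Finset.card_eq_three.2 ⟨u1, u2, u3, h12, h13, h23, rfl⟩]
    exact Finset.card_le_card uA
  have hAX : A ⊆ X := fun a ha => ((mA a).1 ha).1
  have hBX : B ⊆ X := fun a ha => ((mB a).1 ha).1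
  have hAB : ∀ a ∈ A, ∀ b ∈ B, ‖a - b‖ = 1 := fun a ha => ((mA a).1 ha).2
  have hdisj : Disjoint A B := by
    rw [Finset.disjoint_left]
    intro a ha hb
    have := hAB a ha a hb
    simp at this
  -- general use of the geometric lemma
  have geo : ∀ p1 p2 p3 q1 q2 q3 : E4, p1 ∈ A → p2 ∈ A → p3 ∈ A → q1 ∈ B → q2 ∈ B → q3 ∈ B →
      p1 ≠ p2 → p1 ≠ p3 → p2 ≠ p3 → q1 ≠ q2 → q1 ≠ q3 → q2 ≠ q3 → ∀ A' B' : Set E4, 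
      (∀ a ∈ A', ∀ b ∈ ({q1, q2, q3} : Set E4), ‖a - b‖ = 1) →
      (∀ b ∈ B', ∀ a ∈ ({p1, p2, p3} : Set E4), ‖b - a‖ = 1) →
      ∃ (ρ σ : ℝ) (x y z w : E4 → ℝ), ρ + σ = 1 ∧
      (∀ a ∈ A', x a ^2 + y a ^2 = ρ) ∧ (∀ b ∈ B', z b ^2 + w b ^2 = σ) ∧
      (∀ a ∈ A', ∀ a' ∈ A', ‖a - a'‖^2 = (x a - x a')^2 + (y a - y a')^2) ∧
      (∀ b ∈ B', ∀ b' ∈ B', ‖b - b'‖^2 = (z b - z b')^2 + (w b - w b')^2) ∧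
      (∀ a ∈ A', ∀ b ∈ B', ‖a - b‖ = 1) := by
    intro p1 p2 p3 q1 q2 q3 hp1 hp2 hp3 hq1 hq2 hq3 e1 e2 e3 e4 e5 e6 A' B' hA' hB'
    refine lenz p1 p2 p3 q1 q2 q3 e1 e2 e3 e4 e5 e6 ?_ ?_ ?_ A' B' hA' hB'
    all_goals
      rintro b (rfl | rfl | rfl) <;> apply hAB <;> assumption
  obtain ⟨Q, hQB, hQc⟩ := Finset.exists_subset_card_eq (show 3 ≤ B.card by omega)
  obtain ⟨q1, q2, q3, e12, e13, e23, rfl⟩ := Finset.card_eq_three.1 hQc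
  have hq1 : q1 ∈ B := hQB (by simp)
  have hq2 : q2 ∈ B := hQB (by simp)
  have hq3 : q3 ∈ B := hQB (by simp)
  have hBQ : ∀ q ∈ ({q1, q2, q3} : Set E4), q ∈ B := by
    rintro b (rfl | rfl | rfl) <;> assumption
  have hAU : ∀ q ∈ ({u1, u2, u3} : Set E4), q ∈ A := by
    rintro b (rfl | rfl | rfl) <;> assumption
  refine ⟨A ∪ B, Finset.union_subset hAX hBX, ?_, ?_, ?_⟩
  · exact lt_of_lt_of_le hc (Finset.card_le_card Finset.subset_union_right)
  · obtain ⟨ρ, σ, x, y, z, w, h1, h2, h3, h4, h5, -⟩ := geo u1 u2 u3 q1 q2 q3 hu1A hu2A hu3A hq1 hq2 hq3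
      h12 h13 h23 e12 e13 e23 (A : Set E4) (B : Set E4) (fun a ha b hb => hAB a ha b (hBQ b hb))
      (fun b hb a ha => by rw [norm_sub_rev]; exact hAB a (hAU a ha) b hb)
    rw [Finset.card_union_of_disjoint hdisj]
    exact lens_bound A B hA3 (by omega) (by omega) (hd.mono hAX) (hd.mono hBX) ρ σ x y z w h1 h2 h3 h4 h5
  · intro x hx
    rw [Finset.mem_sdiff, Finset.mem_union] at hx
    obtain ⟨hxX, hx⟩ := hx
    push Not at hx
    have c1 : (nb A x).card ≤ 2 := by
      by_contra hcon
      obtain ⟨P, hP, hPc⟩ := Finset.exists_subset_card_eq (show 3 ≤ (nb A x).card by omega)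
      obtain ⟨p1, p2, p3, f12, f13, f23, rfl⟩ := Finset.card_eq_three.1 hPc
      have g1 := mem_nb.1 (hP (show p1 ∈ _ by simp))
      have g2 := mem_nb.1 (hP (show p2 ∈ _ by simp))
      have g3 := mem_nb.1 (hP (show p3 ∈ _ by simp))
      obtain ⟨ρ, σ, -, -, -, -, -, -, -, -, -, h⟩ := geo p1 p2 p3 q1 q2 q3 g1.1 g2.1 g3.1 hq1 hq2 hq3
        f12 f13 f23 e12 e13 e23 (A : Set E4) {x} (fun a ha b hb => hAB a ha b (hBQ b hb))
        (by
          rintro b rfl a (rfl | rfl | rfl)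
          · rw [norm_sub_rev]; exact g1.2
          · rw [norm_sub_rev]; exact g2.2
          · rw [norm_sub_rev]; exact g3.2)
      apply hx.2
      rw [mB]
      exact ⟨hxX, fun a ha => by rw [norm_sub_rev]; exact h a (hAU a ha) x rfl⟩
    have c2 : (nb B x).card ≤ 2 := by
      by_contra hcon
      obtain ⟨P, hP, hPc⟩ := Finset.exists_subset_card_eq (show 3 ≤ (nb B x).card by omega)
      obtain ⟨p1, p2, p3, f12, f13, f23, rfl⟩ := Finset.card_eq_three.1 hPc
      have g1 := mem_nb.1 (hP (show p1 ∈ _ by simp))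
      have g2 := mem_nb.1 (hP (show p2 ∈ _ by simp))
      have g3 := mem_nb.1 (hP (show p3 ∈ _ by simp))
      obtain ⟨ρ, σ, -, -, -, -, -, -, -, -, -, h⟩ := geo u1 u2 u3 p1 p2 p3 hu1A hu2A hu3A g1.1 g2.1 g3.1
        h12 h13 h23 f12 f13 f23 {x} (B : Set E4) 
        (by
          rintro b rfl a (rfl | rfl | rfl)
          · rw [norm_sub_rev]; exact g1.2
          · rw [norm_sub_rev]; exact g2.2
          · rw [norm_sub_rev]; exact g3.2)
        (fun b hb a ha => by rw [norm_sub_rev]; exact hAB a (hAU a ha) b hb)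
      apply hx.1
      rw [mA]
      exact ⟨hxX, fun b hb => h x rfl b hb⟩
    have : nb (A ∪ B) x = nb A x ∪ nb B x := by
      rw [nb, nb, nb, Finset.filter_union]
    rw [this]
    exact (Finset.card_union_le _ _).trans (by omega)

lemma mixed (X L : Finset E4) (hd : DiamOne X) (hL : L ⊆ X) (h4 : ∀ x ∈ X \ L, (nb L x).card ≤ 4) :
    (unitTriangles X).card ≤ (unitTriangles L).card + (unitTriangles (X \ L)).card + 62 * (X \ L).card := by
  set R := X \ L with hR
  have hRX : R ⊆ X := Finset.sdiff_subset
  have hsub : unitTriangles X ⊆ ((unitTriangles L ∪ unitTriangles R) ∪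
      R.biUnion (fun x => ((nb L x).powersetCard 2).image (fun s => insert x s))) ∪
      L.biUnion (fun v => (edg (nb R v)).image (fun s => insert v s)) := by
    intro s hs
    obtain ⟨x, hx, y, hy, z, hz, hxy, hxz, hyz, rfl⟩ := mem_uT.1 hs
    have hyx : ‖y - x‖ = 1 := by rw [norm_sub_rev]; exact hxy
    have hzx : ‖z - x‖ = 1 := by rw [norm_sub_rev]; exact hxz
    have hzy : ‖z - y‖ = 1 := by rw [norm_sub_rev]; exact hyz
    have mk1 : ∀ p q r : E4, p ∈ R → q ∈ L → r ∈ L → ‖q - r‖ = 1 → ‖q - p‖ = 1 → ‖r - p‖ = 1 →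
        ({p, q, r} : Finset E4) ∈ R.biUnion (fun x => ((nb L x).powersetCard 2).image (fun s => insert x s)) := by
      intro p q r hp hq hr h1 h2 h3
      rw [Finset.mem_biUnion]
      refine ⟨p, hp, Finset.mem_image.2 ⟨{q, r}, ?_, rfl⟩⟩
      have : ({q, r} : Finset E4) ∈ edg (nb L p) :=
        mem_edg_pair.2 ⟨q, mem_nb.2 ⟨hq, h2⟩, r, mem_nb.2 ⟨hr, h3⟩, h1, rfl⟩
      exact (Finset.mem_filter.1 this).1
    have mk2 : ∀ p q r : E4, p ∈ L → q ∈ R → r ∈ R → ‖q - r‖ = 1 → ‖q - p‖ = 1 → ‖r - p‖ = 1 →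
        ({p, q, r} : Finset E4) ∈ L.biUnion (fun v => (edg (nb R v)).image (fun s => insert v s)) := by
      intro p q r hp hq hr h1 h2 h3
      rw [Finset.mem_biUnion]
      exact ⟨p, hp, Finset.mem_image.2 ⟨{q, r}, 
        mem_edg_pair.2 ⟨q, mem_nb.2 ⟨hq, h2⟩, r, mem_nb.2 ⟨hr, h3⟩, h1, rfl⟩, rfl⟩⟩
    have e1 : ({x, y, z} : Finset E4) = {y, x, z} := by ext; simp; tauto
    have e2 : ({x, y, z} : Finset E4) = {z, x, y} := by ext; simp; tauto
    have LR : ∀ t ∈ X, t ∈ L ∨ t ∈ R := by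
      intro t ht
      rw [hR, Finset.mem_sdiff]; tauto
    have hx := LR x hx
    have hy := LR y hy
    have hz := LR z hz
    simp only [Finset.mem_union]
    rcases hx with hx | hx <;> rcases hy with hy | hy <;> rcases hz with hz | hz
    · exact Or.inl (Or.inl (Or.inl (mem_uT.2 ⟨x, hx, y, hy, z, hz, hxy, hxz, hyz, rfl⟩)))
    · left; right; rw [e2]; exact mk1 _ _ _ hz hx hy hxy hxz hyz
    · left; right; rw [e1]; exact mk1 _ _ _ hy hx hz hxz hxy hzy
    · right; exact mk2 _ _ _ hx hy hz hyz hyx hzx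
    · left; right; exact mk1 _ _ _ hx hy hz hyz hyx hzx
    · right; rw [e1]; exact mk2 _ _ _ hy hx hz hxz hxy hzy
    · right; rw [e2]; exact mk2 _ _ _ hz hx hy hxy hxz hyz
    · exact Or.inl (Or.inl (Or.inr (mem_uT.2 ⟨x, hx, y, hy, z, hz, hxy, hxz, hyz, rfl⟩)))
  have k1 : (R.biUnion (fun x => ((nb L x).powersetCard 2).image (fun s => insert x s))).card ≤ 6 * R.card := by
    refine Finset.card_biUnion_le.trans ?_
    have : ∀ x ∈ R, (((nb L x).powersetCard 2).image (fun s => insert x s)).card ≤ 6 := by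
      intro x hx
      refine Finset.card_image_le.trans ?_
      rw [Finset.card_powersetCard]
      exact (Nat.choose_le_choose 2 (h4 x hx)).trans (by decide)
    have := Finset.sum_le_sum this
    simpa [mul_comm] using this
  have k2 : (L.biUnion (fun v => (edg (nb R v)).image (fun s => insert v s))).card ≤ 56 * R.card := by
    refine Finset.card_biUnion_le.trans ?_
    have h1 : ∀ v ∈ L, ((edg (nb R v)).image (fun s => insert v s)).card ≤ 14 * (nb R v).card := by
      intro v hv
      refine Finset.card_image_le.trans ?_
      exact edg_bound _ v (fun y hy => (mem_nb.1 hy).2) (hd.mono ((nb_sub _ _).trans hRX))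
    have h2 := Finset.sum_le_sum h1
    rw [← Finset.mul_sum] at h2
    have h3 := Finset.sum_card_bipartiteAbove_eq_sum_card_bipartiteBelow
      (s := R) (t := L) (fun k l => ‖k - l‖ = 1)
    have h5 : ∀ v ∈ L, (R.bipartiteBelow (fun k l => ‖k - l‖ = 1) v) = nb R v := by
      intro v hv; ext k; rw [Finset.bipartiteBelow, Finset.mem_filter, mem_nb]
    have h6 : ∀ v ∈ R, (L.bipartiteAbove (fun k l => ‖k - l‖ = 1) v).card ≤ 4 := by
      intro v hv
      have : L.bipartiteAbove (fun k l => ‖k - l‖ = 1) v = nb L v := by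
        ext k; rw [Finset.bipartiteAbove, Finset.mem_filter, mem_nb, norm_sub_rev]
      rw [this]; exact h4 v hv
    have h7 := Finset.sum_le_sum h6
    rw [h3, Finset.sum_congr rfl (fun v hv => by rw [h5 v hv])] at h7
    rw [Finset.sum_const, smul_eq_mul] at h7
    omega
  refine (Finset.card_le_card hsub).trans ?_
  refine (Finset.card_union_le _ _).trans ?_
  have c4 := (Finset.card_union_le _ _).trans (add_le_add (Finset.card_union_le (unitTriangles L) (unitTriangles R)) k1)
  refine (add_le_add c4 k2).trans ?_
  omega

lemma dichotomy (X : Finset E4) (hd : DiamOne X) (s : ℕ) (hs : 12 ≤ s) (hn : 56^3 * (s + 3) ≤ X.card) :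
    4 * (unitTriangles X).card ≤ X.card^2 ∨ ∃ L ⊆ X, s < L.card ∧ (unitTriangles L).card ≤ F₃ L.card ∧
      ∀ x ∈ X \ L, (nb L x).card ≤ 4 := by
  by_cases h : ∀ a ∈ X, ∀ b ∈ X, ∀ c ∈ X, a ≠ b → a ≠ c → b ≠ c → (cn X {a, b, c}).card ≤ s
  · left
    have hk := kst X s h
    have hT := T_le_deg X hd
    by_contra hcon
    push Not at hcon
    set n := X.card
    set S := ∑ z ∈ X, (nb X z).card
    have h1 : n^2 < 56 * S := by omega
    have h2 : (n^2)^3 < (56 * S)^3 := Nat.pow_lt_pow_left h1 (by norm_num)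
    have h3 : (56 * S)^3 ≤ n * n^5 := by
      calc (56 * S)^3 = 56^3 * S^3 := by ring
        _ ≤ 56^3 * ((s+3) * n^5) := Nat.mul_le_mul_left _ hk
        _ = (56^3 * (s+3)) * n^5 := by ring
        _ ≤ n * n^5 := Nat.mul_le_mul_right _ hn
    have : (n^2)^3 = n * n^5 := by ring
    omega
  · right
    push Not at h
    obtain ⟨a, ha, b, hb, c, hc, hab, hac, hbc, hlt⟩ := h
    exact lens_exists X hd s hs a b c ha hb hc hab hac hbc hlt

lemma uT_triv (X : Finset E4) : (unitTriangles X).card ≤ X.card^3 := by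
  refine (Finset.card_filter_le _ _).trans ?_
  rw [Finset.card_powersetCard]
  exact Nat.choose_le_pow _ _

lemma weak : ∃ C : ℝ, 1 ≤ C ∧ ∀ (n : ℕ) (X : Finset E4), X.card = n → DiamOne X →
    ((unitTriangles X).card : ℝ) ≤ (n:ℝ)^2/4 + C * n := by
  obtain ⟨K, hK⟩ : ∃ K : ℕ, K = 56^3 * (200 + 3) := ⟨_, rfl⟩
  refine ⟨(K:ℝ)^2 + 1, by nlinarith [sq_nonneg (K:ℝ)], ?_⟩
  intro n
  induction n using Nat.strong_induction_on with
  | _ n ih =>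
    intro X hX hd
    have hn0 : (0:ℝ) ≤ n := by positivity
    rcases lt_or_ge n K with hlt | hge
    · have h1 := uT_triv X
      rw [hX] at h1
      have h2 : ((unitTriangles X).card : ℝ) ≤ (n:ℝ)^3 := by exact_mod_cast h1
      have h3 : (n:ℝ) ≤ K := by exact_mod_cast hlt.le
      have h4 : (n:ℝ)^2 ≤ (K:ℝ)^2 := pow_le_pow_left₀ hn0 h3 2
      have h5 : (n:ℝ)^3 ≤ (K:ℝ)^2 * n := by
        rw [show (n:ℝ)^3 = n^2 * n by ring]
        exact mul_le_mul_of_nonneg_right h4 hn0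
      have := sq_nonneg (n:ℝ)
      nlinarith
    · rcases dichotomy X hd 200 (by norm_num) (by rw [hX, ← hK]; exact hge) with h | ⟨L, hL, hLs, hLT, hL4⟩
      · rw [hX] at h
        have h2 : 4 * ((unitTriangles X).card : ℝ) ≤ (n:ℝ)^2 := by exact_mod_cast h
        have : 0 ≤ ((K:ℝ)^2 + 1) * n := by positivity
        linarith
      · have hm := mixed X L hd hL hL4
        have hc : (X \ L).card + L.card = n := by rw [← hX]; exact Finset.card_sdiff_add_card_eq_card hL
        have hi := ih (X \ L).card (by omega) (X \ L) rfl (hd.mono Finset.sdiff_subset)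
        have hF := (F3_real L.card (by omega)).2
        set l := L.card
        set r := (X \ L).card
        have hm' : ((unitTriangles X).card : ℝ) ≤ (unitTriangles L).card + (unitTriangles (X \ L)).card + 62 * r := by
          exact_mod_cast hm
        have hLT' : ((unitTriangles L).card : ℝ) ≤ F₃ l := by exact_mod_cast hLT
        have hnr : (n:ℝ) = r + l := by rw [← hc]; push_cast; ring
        have hl : (200:ℝ) ≤ l := by exact_mod_cast hLs.le
        have hr : (0:ℝ) ≤ r := by positivity
        rw [hnr]
        have hK2 : (0:ℝ) ≤ (K:ℝ)^2 := sq_nonneg _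
        have e1 : 0 ≤ (K:ℝ)^2 * l := by positivity
        have e2 : 200 * (r:ℝ) ≤ l * r := mul_le_mul_of_nonneg_right hl hr
        nlinarith

lemma upper : ∃ N : ℕ, ∀ n : ℕ, n ≥ N → ∀ X : Finset E4, X.card = n → DiamOne X →
    (unitTriangles X).card ≤ F₃ n := by
  obtain ⟨C, hC1, hC⟩ := weak
  obtain ⟨s, hs⟩ := exists_nat_gt (2 * (C + 62) + 16)
  have hs16 : 16 < s := by
    have : (16:ℝ) < s := by linarith
    exact_mod_cast this
  refine ⟨56^3 * (s + 3), ?_⟩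
  intro n hn X hX hd
  have hn2 : 2 ≤ n := by omega
  rcases dichotomy X hd s (by omega) (by rw [hX]; exact hn) with h | ⟨L, hL, hLs, hLT, hL4⟩
  · have hF := (F3_real n hn2).1
    rw [hX] at h
    have h2 : 4 * ((unitTriangles X).card : ℝ) ≤ (n:ℝ)^2 := by exact_mod_cast h
    rw [← @Nat.cast_le ℝ]
    have : (2:ℝ) ≤ n := by exact_mod_cast hn2
    linarith
  · have hm := mixed X L hd hL hL4
    have hc : (X \ L).card + L.card = n := by rw [← hX]; exact Finset.card_sdiff_add_card_eq_card hL
    rcases Nat.eq_zero_or_pos (X \ L).card with h0 | h0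
    · have : X \ L = ∅ := Finset.card_eq_zero.1 h0
      have hXL : X = L := Finset.Subset.antisymm (Finset.sdiff_eq_empty_iff_subset.1 this) hL
      rw [hXL] at hX ⊢
      rw [← hX]; exact hLT
    · have hi := hC (X \ L).card (X \ L) rfl (hd.mono Finset.sdiff_subset)
      have hF := (F3_real L.card (by omega)).2
      have hFn := (F3_real n hn2).1
      set l := L.card
      set r := (X \ L).card
      have hm' : ((unitTriangles X).card : ℝ) ≤ (unitTriangles L).card + (unitTriangles (X \ L)).card + 62 * r := by
        exact_mod_cast hm
      have hLT' : ((unitTriangles L).card : ℝ) ≤ F₃ l := by exact_mod_cast hLT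
      have hnr : (n:ℝ) = r + l := by rw [← hc]; push_cast; ring
      have hl : (s:ℝ) ≤ l := by exact_mod_cast hLs.le
      have hr : (1:ℝ) ≤ r := by exact_mod_cast h0
      rw [hnr] at hFn
      rw [← @Nat.cast_le ℝ]
      have e2 : (2 * (C + 62) + 16) * (r:ℝ) ≤ l * r := mul_le_mul_of_nonneg_right (by linarith) (by linarith)
      nlinarith

lemma combin (a b k : ℕ) (ha : 2 ≤ a) (hb : b = 2 * k + 1) (hk : 1 ≤ k) (A B : ℕ → E4)
    (hAB : ∀ i j, ‖A i - B j‖ = 1)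
    (hA : ∀ i < a, ∀ i' < a, ‖A i - A i'‖ ≤ 1) (hB : ∀ i < b, ∀ i' < b, ‖B i - B i'‖ ≤ 1)
    (iA : ∀ i < a, ∀ i' < a, A i = A i' → i = i') (iB : ∀ i < b, ∀ i' < b, B i = B i' → i = i')
    (eA : ‖A 0 - A (a - 1)‖ = 1)
    (eB : ∀ j < b, ‖B j - B (if j + k < b then j + k else j + k - b)‖ = 1) :
    ∃ X : Finset E4, X.card = a + b ∧ DiamOne X ∧ (a + 1) * b ≤ (unitTriangles X).card := by
  have hABn : ∀ i j, A i ≠ B j := by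
    intro i j h
    have := hAB i j
    rw [h] at this; simp at this
  have hBA : ∀ i j, ‖B j - A i‖ = 1 := fun i j => by rw [norm_sub_rev]; exact hAB i j
  set X := (Finset.range a).image A ∪ (Finset.range b).image B with hX
  have mA : ∀ i < a, A i ∈ X := fun i hi =>
    Finset.mem_union_left _ (Finset.mem_image_of_mem _ (Finset.mem_range.2 hi))
  have mB : ∀ i < b, B i ∈ X := fun i hi =>
    Finset.mem_union_right _ (Finset.mem_image_of_mem _ (Finset.mem_range.2 hi))
  have hcases : ∀ x ∈ X, (∃ i < a, x = A i) ∨ (∃ j < b, x = B j) := by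
    intro x hx
    rw [hX, Finset.mem_union, Finset.mem_image, Finset.mem_image] at hx
    rcases hx with ⟨i, hi, rfl⟩ | ⟨i, hi, rfl⟩
    · exact Or.inl ⟨i, Finset.mem_range.1 hi, rfl⟩
    · exact Or.inr ⟨i, Finset.mem_range.1 hi, rfl⟩
  refine ⟨X, ?_, ?_, ?_⟩
  · rw [hX, Finset.card_union_of_disjoint, Finset.card_image_of_injOn, Finset.card_image_of_injOn]
    · simp
    · intro i hi i' hi' h
      exact iB i (by simpa using hi) i' (by simpa using hi') h
    · intro i hi i' hi' h
      exact iA i (by simpa using hi) i' (by simpa using hi') h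
    · rw [Finset.disjoint_left]
      intro x hx hx'
      obtain ⟨i, hi, rfl⟩ := Finset.mem_image.1 hx
      obtain ⟨j, hj, h⟩ := Finset.mem_image.1 hx'
      exact hABn i j h.symm
  · intro x hx y hy
    rcases hcases x hx with ⟨i, hi, rfl⟩ | ⟨i, hi, rfl⟩ <;>
      rcases hcases y hy with ⟨j, hj, rfl⟩ | ⟨j, hj, rfl⟩
    · exact hA i hi j hj
    · exact (hAB i j).le
    · exact (hBA j i).le
    · exact hB i hi j hj
  · set nx : ℕ → ℕ := fun j => if j + k < b then j + k else j + k - b with hnx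
    have nxlt : ∀ j < b, nx j < b := by
      intro j hj; simp only [hnx]; split_ifs <;> omega
    have nxinj : ∀ j < b, ∀ l < b, (j = l ∨ j = nx l) → (nx j = l ∨ nx j = nx l) → j = l := by
      intro j hj l hl; simp only [hnx]; split_ifs <;> omega
    set T1 := (Finset.range a ×ˢ Finset.range b).image (fun p => ({A p.1, B p.2, B (nx p.2)} : Finset E4)) with hT1
    set T2 := (Finset.range b).image (fun j => ({A 0, A (a-1), B j} : Finset E4)) with hT2
    have c1 : T1.card = a * b := by
      rw [hT1, Finset.card_image_of_injOn]
      · simp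
      · rintro ⟨i, j⟩ hij ⟨i', l⟩ hil h
        simp only [Finset.coe_product, Set.mem_prod, Finset.mem_coe, Finset.mem_range] at hij hil
        simp only at h
        have m1 : A i ∈ ({A i', B l, B (nx l)} : Finset E4) := by rw [← h]; simp
        have m2 : B j ∈ ({A i', B l, B (nx l)} : Finset E4) := by rw [← h]; simp
        have m3 : B (nx j) ∈ ({A i', B l, B (nx l)} : Finset E4) := by rw [← h]; simp
        simp only [Finset.mem_insert, Finset.mem_singleton, hABn, (hABn _ _).symm, false_or, or_false] at m1 m2 m3
        have g1 := iA i hij.1 i' hil.1 m1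
        have g2 := m2.imp (iB j hij.2 l hil.2) (iB j hij.2 _ (nxlt l hil.2))
        have g3 := m3.imp (iB _ (nxlt j hij.2) l hil.2) (iB _ (nxlt j hij.2) _ (nxlt l hil.2))
        have g4 := nxinj j hij.2 l hil.2 g2 g3
        rw [g1, g4]
    have c2 : T2.card = b := by
      rw [hT2, Finset.card_image_of_injOn]
      · simp
      · intro j hj l hl h
        have hj' : j < b := by simpa using hj
        have hl' : l < b := by simpa using hl
        simp only at h
        have m2 : B j ∈ ({A 0, A (a-1), B l} : Finset E4) := by rw [← h]; simp
        simp only [Finset.mem_insert, Finset.mem_singleton, (hABn _ _).symm, false_or] at m2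
        exact iB j hj' l hl' m2
    have hdisj : Disjoint T1 T2 := by
      rw [Finset.disjoint_left]
      intro t h1 h2
      obtain ⟨⟨i, j⟩, hij, rfl⟩ := Finset.mem_image.1 h1
      obtain ⟨l, hl, h⟩ := Finset.mem_image.1 h2
      simp only [Finset.mem_product, Finset.mem_range] at hij
      simp only at h
      have m1 : A 0 ∈ ({A i, B j, B (nx j)} : Finset E4) := by rw [← h]; simp
      have m2 : A (a-1) ∈ ({A i, B j, B (nx j)} : Finset E4) := by rw [← h]; simp
      simp only [Finset.mem_insert, Finset.mem_singleton, hABn, or_false] at m1 m2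
      have g1 := iA 0 (by omega) i hij.1 m1
      have g2 := iA (a-1) (by omega) i hij.1 m2
      omega
    have hsub : T1 ∪ T2 ⊆ unitTriangles X := by
      intro t ht
      rw [Finset.mem_union] at ht
      rcases ht with ht | ht
      · obtain ⟨⟨i, j⟩, hij, rfl⟩ := Finset.mem_image.1 ht
        simp only [Finset.mem_product, Finset.mem_range] at hij
        exact mem_uT.2 ⟨_, mA i hij.1, _, mB j hij.2, _, mB _ (nxlt j hij.2), hAB _ _, hAB _ _,
          eB j hij.2, rfl⟩
      · obtain ⟨j, hj, rfl⟩ := Finset.mem_image.1 ht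
        rw [Finset.mem_range] at hj
        exact mem_uT.2 ⟨_, mA 0 (by omega), _, mA (a-1) (by omega), _, mB j hj, eA, hAB _ _, hAB _ _, rfl⟩
    have := Finset.card_le_card hsub
    rw [Finset.card_union_of_disjoint hdisj, c1, c2] at this
    calc (a + 1) * b = a * b + b := by ring
      _ ≤ _ := this

set_option maxHeartbeats 1000000 in
lemma construct (a b k : ℕ) (ha : 2 ≤ a) (hb : b = 2 * k + 1) (hk : 1 ≤ k) :
    ∃ X : Finset E4, X.card = a + b ∧ DiamOne X ∧ (a + 1) * b ≤ (unitTriangles X).card := by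
  have hπ := Real.pi_pos
  have hb3 : (3:ℝ) ≤ b := by rw [hb]; exact_mod_cast (by omega : 3 ≤ 2 * k + 1)
  have hbp : (0:ℝ) < b := by linarith
  set c := Real.cos (Real.pi / b) with hc
  have hc0 : 0 ≤ c := by
    apply Real.cos_nonneg_of_neg_pi_div_two_le_of_le
    · have : 0 < Real.pi / b := by positivity
      linarith
    · rw [div_le_div_iff₀ hbp two_pos]; nlinarith
  set r := Real.sqrt (1 / (2 * (1 + c))) with hr
  have hr2 : r^2 = 1 / (2 * (1 + c)) := Real.sq_sqrt (by positivity)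
  have hr2' : r^2 * (2 * (1 + c)) = 1 := by rw [hr2]; field_simp
  have hrle : r^2 ≤ 1/2 := by nlinarith [sq_nonneg r]
  have hrpos : 0 < r^2 := by rw [hr2]; positivity
  set R := Real.sqrt (1 - r^2) with hR
  have hR2 : R^2 = 1 - r^2 := Real.sq_sqrt (by linarith)
  have hRge : 1/2 ≤ R^2 := by linarith
  set θ := Real.arccos (1 - 1 / (2 * R^2)) with hθ
  have hq : 1 / (2 * R^2) ≤ 1 := by rw [div_le_one (by linarith)]; linarith
  have hq0 : 0 < 1 / (2 * R^2) := by positivity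
  have hcθ : Real.cos θ = 1 - 1 / (2 * R^2) := Real.cos_arccos (by linarith) (by linarith)
  have hθ0 : 0 < θ := Real.arccos_pos.2 (by linarith)
  have hθπ : θ ≤ Real.pi := Real.arccos_le_pi _
  have hcθ' : R^2 * (2 * (1 - Real.cos θ)) = 1 := by
    have hRp : 0 < 2 * R^2 := by linarith
    rw [hcθ, show R^2 * (2 * (1 - (1 - 1 / (2 * R^2)))) = (2 * R^2) * (1 / (2 * R^2)) by ring]
    exact mul_one_div_cancel hRp.ne'
  set P : ℝ → E4 := fun t => !₂[R * Real.cos t, R * Real.sin t, 0, 0] with hP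
  set Q : ℝ → E4 := fun t => !₂[0, 0, r * Real.cos t, r * Real.sin t] with hQ
  have nP : ∀ t u, ‖P t - P u‖^2 = R^2 * (2 * (1 - Real.cos (t - u))) := by
    intro t u
    rw [nsq, Real.cos_sub]
    simp [hP]
    linear_combination R^2 * Real.sin_sq_add_cos_sq t + R^2 * Real.sin_sq_add_cos_sq u
  have nQ : ∀ t u, ‖Q t - Q u‖^2 = r^2 * (2 * (1 - Real.cos (t - u))) := by
    intro t u
    rw [nsq, Real.cos_sub]
    simp [hQ]
    linear_combination r^2 * Real.sin_sq_add_cos_sq t + r^2 * Real.sin_sq_add_cos_sq u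
  have nPQ : ∀ t u, ‖P t - Q u‖ = 1 := by
    intro t u
    rw [one_iff_sq, nsq]
    simp [hP, hQ]
    linear_combination R^2 * Real.sin_sq_add_cos_sq t + r^2 * Real.sin_sq_add_cos_sq u + hR2
  have zero_of : ∀ x : ℝ, |x| < 2 * Real.pi → Real.cos x = 1 → x = 0 := by
    intro x hx h
    rw [abs_lt] at hx
    exact (Real.cos_eq_one_iff_of_lt_of_lt hx.1 hx.2).1 h
  have ha1 : (0:ℝ) < (a:ℝ) - 1 := by
    have : (2:ℝ) ≤ a := by exact_mod_cast ha
    linarith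
  set α : ℕ → ℝ := fun i => i * (θ / ((a:ℝ) - 1)) with hα
  set β : ℕ → ℝ := fun j => j * (2 * Real.pi / b) with hβ
  have hαd : ∀ i < a, ∀ i' < a, |α i - α i'| ≤ θ := by
    intro i hi i' hi'
    have h0 : 0 < θ / ((a:ℝ) - 1) := by positivity
    have hi2 : (i:ℝ) ≤ (a:ℝ) - 1 := by
      have : (i:ℝ) + 1 ≤ a := by exact_mod_cast hi
      linarith
    have hi2' : (i':ℝ) ≤ (a:ℝ) - 1 := by
      have : (i':ℝ) + 1 ≤ a := by exact_mod_cast hi'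
      linarith
    have hi0 : (0:ℝ) ≤ i := by positivity
    have hi0' : (0:ℝ) ≤ i' := by positivity
    simp only [hα]
    rw [← sub_mul, abs_mul, abs_of_pos h0]
    calc _ ≤ ((a:ℝ) - 1) * (θ / ((a:ℝ) - 1)) := by
          apply mul_le_mul_of_nonneg_right _ h0.le
          rw [abs_le]; constructor <;> linarith
      _ = θ := by field_simp
  have hβd : ∀ i < b, ∀ i' < b, |β i - β i'| < 2 * Real.pi ∧ - c ≤ Real.cos (β i - β i') := by
    intro i hi i' hi'
    have h0 : 0 < 2 * Real.pi / b := by positivity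
    obtain ⟨d, hd, hdb⟩ : ∃ d : ℕ, |β i - β i'| = d * (2 * Real.pi / b) ∧ d < b := by
      simp only [hβ]
      rw [← sub_mul, abs_mul, abs_of_pos h0]
      rcases le_total i i' with h | h
      · refine ⟨i' - i, ?_, by omega⟩
        rw [Nat.cast_sub h, abs_sub_comm, abs_of_nonneg]
        have : (i:ℝ) ≤ i' := by exact_mod_cast h
        linarith
      · refine ⟨i - i', ?_, by omega⟩
        rw [Nat.cast_sub h, abs_of_nonneg]
        have : (i':ℝ) ≤ i := by exact_mod_cast h
        linarith
    have hdb' : (d:ℝ) < b := by exact_mod_cast hdb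
    have hd0 : (0:ℝ) ≤ d := by positivity
    have hπb : 0 < Real.pi / b := by positivity
    have hbb : (b:ℝ) * (Real.pi / b) = Real.pi := by field_simp
    have e2 : 2 * Real.pi / b = 2 * (Real.pi / b) := by ring
    constructor
    · rw [hd, e2]
      nlinarith
    · rw [← Real.cos_abs, hd, e2, hc, ← Real.cos_pi_sub]
      rcases Nat.lt_or_ge (2 * d) b with h | h
      · have h' : 2 * (d:ℝ) + 1 ≤ b := by exact_mod_cast h
        apply Real.cos_le_cos_of_nonneg_of_le_pi
        · positivity
        · linarith
        · nlinarith
      · have h1 : b + 1 ≤ 2 * d := by omega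
        have h' : (b:ℝ) + 1 ≤ 2 * d := by exact_mod_cast h1
        rw [← Real.cos_two_pi_sub (d * (2 * (Real.pi / b)))]
        apply Real.cos_le_cos_of_nonneg_of_le_pi
        · nlinarith
        · linarith
        · nlinarith
  refine combin a b k ha hb hk (fun i => P (α i)) (fun j => Q (β j)) (fun i j => nPQ _ _) ?_ ?_ ?_ ?_ ?_ ?_
  · intro i hi i' hi'
    rw [le_one_iff_sq, nP, ← hcθ']
    have : Real.cos θ ≤ Real.cos (α i - α i') := by
      rw [← Real.cos_abs (α i - α i')]
      exact Real.cos_le_cos_of_nonneg_of_le_pi (abs_nonneg _) hθπ (hαd i hi i' hi')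
    apply mul_le_mul_of_nonneg_left _ (sq_nonneg R)
    linarith
  · intro i hi i' hi'
    rw [le_one_iff_sq, nQ, ← hr2']
    have := (hβd i hi i' hi').2
    apply mul_le_mul_of_nonneg_left _ (sq_nonneg r)
    linarith
  · intro i hi i' hi' h
    have h1 := nP (α i) (α i')
    have h : P (α i) = P (α i') := h
    rw [h, sub_self, norm_zero] at h1
    have h2 : Real.cos (α i - α i') = 1 := by
      have : R^2 ≠ 0 := by intro h; linarith
      have h3 : R^2 * (2 * (1 - Real.cos (α i - α i'))) = 0 := by rw [← h1]; norm_num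
      rcases mul_eq_zero.1 h3 with h | h
      · exact absurd h this
      · linarith
    have h4 := zero_of _ (lt_of_le_of_lt (hαd i hi i' hi') (by linarith)) h2
    simp only [hα] at h4
    rw [← sub_mul] at h4
    rcases mul_eq_zero.1 h4 with h | h
    · exact_mod_cast sub_eq_zero.1 h
    · exact absurd h (by positivity)
  · intro i hi i' hi' h
    have h1 := nQ (β i) (β i')
    have h : Q (β i) = Q (β i') := h
    rw [h, sub_self, norm_zero] at h1
    have h2 : Real.cos (β i - β i') = 1 := by
      have h3 : r^2 * (2 * (1 - Real.cos (β i - β i'))) = 0 := by rw [← h1]; norm_num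
      rcases mul_eq_zero.1 h3 with h | h
      · exact absurd h hrpos.ne'
      · linarith
    have h4 := zero_of _ (hβd i hi i' hi').1 h2
    simp only [hβ] at h4
    rw [← sub_mul] at h4
    rcases mul_eq_zero.1 h4 with h | h
    · exact_mod_cast sub_eq_zero.1 h
    · exact absurd h (by positivity)
  · have h1 : α 0 - α (a - 1) = -θ := by
      simp only [hα]
      rw [Nat.cast_sub (by omega), Nat.cast_zero, Nat.cast_one, zero_mul, zero_sub,
        mul_div_cancel₀ _ ha1.ne']
    have h2 := nP (α 0) (α (a - 1))
    rw [h1, Real.cos_neg, hcθ'] at h2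
    exact (one_iff_sq _ _).2 h2
  · intro j hj
    have hbk : (b:ℝ) = 2 * k + 1 := by rw [hb]; push_cast; ring
    have hcs : Real.cos (β j - β (if j + k < b then j + k else j + k - b)) = - c := by
      have hbb : (b:ℝ) * (Real.pi / b) = Real.pi := mul_div_cancel₀ _ hbp.ne'
      have e2 : 2 * Real.pi / b = 2 * (Real.pi / b) := by ring
      have hπ2 : Real.pi = (2 * k + 1) * (Real.pi / b) := by rw [← hbk]; exact hbb.symm
      split_ifs with h
      · have h1 : β j - β (j + k) = -(Real.pi - Real.pi / b) := by
          simp only [hβ]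
          rw [Nat.cast_add, e2]
          linear_combination hπ2
        rw [h1, Real.cos_neg, Real.cos_pi_sub]
      · have h1 : β j - β (j + k - b) = Real.pi / b + Real.pi := by
          simp only [hβ]
          rw [Nat.cast_sub (by omega), Nat.cast_add, e2]
          linear_combination 2 * hbb + hπ2
        rw [h1, Real.cos_add_pi]
    have h2 := nQ (β j) (β (if j + k < b then j + k else j + k - b))
    rw [hcs, sub_neg_eq_add, hr2'] at h2
    exact (one_iff_sq _ _).2 h2

theorem max_triangles_diameter_graph_R4 :
    ∃ N : ℕ, ∀ n : ℕ, n ≥ N →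
      (∀ X : Finset (EuclideanSpace ℝ (Fin 4)), X.card = n →
        (∀ x ∈ X, ∀ y ∈ X, ‖x - y‖ ≤ 1) → (unitTriangles X).card ≤ F₃ n) ∧
      (∃ X : Finset (EuclideanSpace ℝ (Fin 4)), X.card = n ∧
        (∀ x ∈ X, ∀ y ∈ X, ‖x - y‖ ≤ 1) ∧ (unitTriangles X).card = F₃ n) := by
  obtain ⟨N, hN⟩ := upper
  refine ⟨N + 8, fun n hn => ⟨fun X hX hd => hN n (by omega) X hX hd, ?_⟩⟩
  obtain ⟨k, hk⟩ : ∃ k, k = n / 4 := ⟨_, rfl⟩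
  obtain ⟨X, hX, hd, hT⟩ := construct (n - (2*k+1)) (2*k+1) k (by omega) rfl (by omega)
  have hXn : X.card = n := by omega
  refine ⟨X, hXn, hd, le_antisymm (hN n (by omega) X hXn hd) (le_trans (le_of_eq ?_) hT)⟩
  obtain ⟨h1, h2, h3⟩ := F3_val n (by omega)
  have hcases : n = 4*k ∨ n = 4*k+1 ∨ n = 4*k+2 ∨ n = 4*k+3 := by omega
  rcases hcases with h | h | h | h
  · have := h3 (by omega)
    rw [show n - (2*k+1) + 1 = 2*k by omega]
    rw [h] at this ⊢
    nlinarith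
  · have := h1 (by omega)
    rw [show n - (2*k+1) + 1 = 2*k+1 by omega]
    rw [h] at this ⊢
    nlinarith
  · have := h3 (by omega)
    rw [show n - (2*k+1) + 1 = 2*k+2 by omega]
    rw [h] at this ⊢
    nlinarith
  · have := h2 (by omega)
    rw [show n - (2*k+1) + 1 = 2*k+3 by omega]
    rw [h] at this ⊢
    nlinarith
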